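/- arXiv:1001.1055 — 2 statements merged into one kernel-verified Lean document; each statement's English description precedes it below -/
import Mathlib

section
/- Let S(X,Y,Z) = X²u(Y,Z) + Xv(Y,Z) + w(Y,Z) be a cubic form over 𝔽_q (so u is linear, v quadratic, w cubic) with v(Y,0) not identically zero and w(0,Z) not identically zero. If S is not absolutely irreducible, then S has a linear factor defined over 𝔽_q that is not a scalar multiple of Z, and consequently S has a zero (X,Y,Z) ∈ 𝔽_q³ with Z ≠ 0. -/
open MvPolynomial

namespace SliceAux

lemma top_mul {K : Type*} [Field K] {A B : MvPolynomial (Fin 3) K} {a b : ℕ}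
    (hA : A.totalDegree ≤ a) (hB : B.totalDegree ≤ b) (h : (A * B).IsHomogeneous (a + b)) :
    homogeneousComponent a A * homogeneousComponent b B = A * B := by
  classical
  have h' : (homogeneousComponent a A * homogeneousComponent b B).IsHomogeneous (a + b) :=
    (homogeneousComponent_isHomogeneous a A).mul (homogeneousComponent_isHomogeneous b B)
  ext d
  by_cases hd : d.degree = a + b
  · rw [coeff_mul, coeff_mul]
    refine Finset.sum_congr rfl fun p hp => ?_
    have hp := Finset.HasAntidiagonal.mem_antidiagonal.mp hp
    have hpd : p.1.degree + p.2.degree = a + b := by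
      rw [← hd, ← hp, map_add]
    rw [coeff_homogeneousComponent, coeff_homogeneousComponent]
    have key : ∀ (P : MvPolynomial (Fin 3) K) (e : Fin 3 →₀ ℕ), P.totalDegree < e.degree →
        coeff e P = 0 := by
      intro P e he
      exact coeff_eq_zero_of_totalDegree_lt he
    by_cases h1 : p.1.degree = a
    · have h2 : p.2.degree = b := by omega
      simp [h1, h2]
    · rw [if_neg h1, zero_mul]
      rcases lt_or_gt_of_ne h1 with h3 | h3
      · rw [key B p.2 (by omega), mul_zero]
      · rw [key A p.1 (by omega), zero_mul]
  · rw [h.coeff_eq_zero hd, h'.coeff_eq_zero hd]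

lemma lin_form {K : Type*} [Field K] {L : MvPolynomial (Fin 3) K} (h : L.IsHomogeneous 1) :
    ∃ a b c : K, L = C a * X 0 + C b * X 1 + C c * X 2 := by
  classical
  refine ⟨coeff (Finsupp.single 0 1) L, coeff (Finsupp.single 1 1) L,
    coeff (Finsupp.single 2 1) L, ?_⟩
  have h' : (C (coeff (Finsupp.single 0 1) L) * X 0 + C (coeff (Finsupp.single 1 1) L) * X 1 +
      C (coeff (Finsupp.single 2 1) L) * X 2 : MvPolynomial (Fin 3) K).IsHomogeneous 1 :=
    ((isHomogeneous_C_mul_X _ _).add (isHomogeneous_C_mul_X _ _)).add (isHomogeneous_C_mul_X _ _)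
  ext d
  by_cases hd : d.degree = 1
  · have : ∃ i, d = Finsupp.single i 1 := by
      have h3 : d 0 + d 1 + d 2 = 1 := by
        rw [Finsupp.degree_eq_sum, Fin.sum_univ_three] at hd
        exact hd
      have : (d 0 = 1 ∧ d 1 = 0 ∧ d 2 = 0) ∨ (d 0 = 0 ∧ d 1 = 1 ∧ d 2 = 0) ∨
        (d 0 = 0 ∧ d 1 = 0 ∧ d 2 = 1) := by omega
      rcases this with h | h | h
      · exact ⟨0, by ext j; fin_cases j <;> simp [h]⟩
      · exact ⟨1, by ext j; fin_cases j <;> simp [h]⟩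
      · exact ⟨2, by ext j; fin_cases j <;> simp [h]⟩
    obtain ⟨i, rfl⟩ := this
    fin_cases i <;> simp [coeff_C_mul, coeff_X, Finsupp.single_left_inj]
  · rw [h.coeff_eq_zero hd, h'.coeff_eq_zero hd]

lemma lin_irred {K : Type*} [Field K] {L : MvPolynomial (Fin 3) K} (h : L.IsHomogeneous 1)
    (h0 : L ≠ 0) : Irreducible L := by
  refine irreducible_of_totalDegree_eq_one (h.totalDegree h0) fun x hx => ?_
  obtain ⟨d, hd⟩ := exists_coeff_ne_zero h0
  refine isUnit_iff_ne_zero.mpr ?_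
  rintro rfl
  exact hd (zero_dvd_iff.mp (hx d))

/-- A linear form dividing another one is proportional to it. -/
lemma lin_dvd {K : Type*} [Field K] {L M : MvPolynomial (Fin 3) K} (h : L.IsHomogeneous 1)
    (h0 : L ≠ 0) (h' : M.IsHomogeneous 1) (h0' : M ≠ 0) (hd : L ∣ M) :
    ∃ c : K, c ≠ 0 ∧ M = C c * L := by
  obtain ⟨D, rfl⟩ := hd
  have hD : D ≠ 0 := right_ne_zero_of_mul h0'
  have := h'.totalDegree h0'
  rw [totalDegree_mul_of_isDomain h0 hD, h.totalDegree h0] at this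
  have h3 := totalDegree_eq_zero_iff_eq_C.mp (show D.totalDegree = 0 by omega)
  refine ⟨coeff 0 D, ?_, ?_⟩
  · intro h4
    rw [h4, C_0] at h3
    exact hD h3
  · rw [← h3, mul_comm]

section frob
variable (F K : Type*) [Field F] [Fintype F] [Field K] [Algebra F K]

/-- Frobenius acting on coefficients. -/
noncomputable def frob : MvPolynomial (Fin 3) K →+* MvPolynomial (Fin 3) K :=
  MvPolynomial.map (FiniteField.frobeniusAlgHom F K : K →+* K)

lemma frob_inj : Function.Injective (frob F K) :=
  map_injective _ (RingHom.injective _)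

lemma frob_hom {L : MvPolynomial (Fin 3) K} {n : ℕ} (h : L.IsHomogeneous n) :
    (frob F K L).IsHomogeneous n := h.map _

lemma frob_base (S : MvPolynomial (Fin 3) F) :
    frob F K (MvPolynomial.map (algebraMap F K) S) = MvPolynomial.map (algebraMap F K) S := by
  unfold frob
  rw [MvPolynomial.map_map]
  have : (FiniteField.frobeniusAlgHom F K : K →+* K).comp (algebraMap F K) = algebraMap F K := by
    ext x
    exact (FiniteField.frobeniusAlgHom F K).commutes x
  rw [this]

lemma fixed {x : K} (h : x ^ Fintype.card F = x) : x ∈ Set.range (algebraMap F K) := by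
  classical
  have hs : (Polynomial.X ^ Fintype.card F - Polynomial.X : Polynomial F) =
      ∏ a : F, (Polynomial.X - Polynomial.C a) := by
    have hr := FiniteField.roots_X_pow_card_sub_X F
    have hm : (Polynomial.X ^ Fintype.card F - Polynomial.X : Polynomial F).Monic :=
      Polynomial.monic_X_pow_sub (by simpa using Fintype.one_lt_card)
    have := Polynomial.prod_multiset_X_sub_C_of_monic_of_roots_card_eq hm (by
      rw [hr, FiniteField.X_pow_card_sub_X_natDegree_eq F Fintype.one_lt_card]
      rfl)
    rw [← this, hr]
    rfl
  have := congrArg (Polynomial.aeval x) hs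
  rw [map_prod, map_sub, map_pow, Polynomial.aeval_X, h, sub_self] at this
  obtain ⟨a, ha⟩ := Finset.prod_eq_zero_iff.mp this.symm
  have ha2 := ha.2
  rw [map_sub, Polynomial.aeval_X, Polynomial.aeval_C] at ha2
  exact ⟨a, (sub_eq_zero.mp ha2).symm⟩

lemma descend {P : MvPolynomial (Fin 3) K} (h : frob F K P = P) :
    ∃ P0 : MvPolynomial (Fin 3) F, MvPolynomial.map (algebraMap F K) P0 = P := by
  have : P ∈ Set.range (MvPolynomial.map (σ := Fin 3) (algebraMap F K)) := by
    rw [mem_range_map_iff_coeffs_subset]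
    intro x hx
    rw [Finset.mem_coe, mem_coeffs_iff] at hx
    obtain ⟨d, -, rfl⟩ := hx
    apply fixed
    have := congrArg (coeff d) h
    simpa [frob, coeff_map] using this
  exact this

lemma lin_descend {L B : MvPolynomial (Fin 3) K} {S : MvPolynomial (Fin 3) F}
    (h : L.IsHomogeneous 1) (h0 : L ≠ 0) (hB : MvPolynomial.map (algebraMap F K) S = L * B)
    (hd : L ∣ frob F K L) :
    ∃ L0 : MvPolynomial (Fin 3) F, L0.IsHomogeneous 1 ∧ L0 ∣ S := by
  obtain ⟨c, hc, hcL⟩ := lin_dvd h h0 (frob_hom F K h)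
    (by rw [Ne, map_eq_zero_iff _ (frob_inj F K)]; exact h0) hd
  obtain ⟨d, he⟩ := exists_coeff_ne_zero h0
  set e := coeff d L with hedef
  have h1 : e ^ Fintype.card F = c * e := by
    have := congrArg (coeff d) hcL
    simpa [frob, coeff_map] using this
  have hC : ∀ x : K, frob F K (C x) = C (x ^ Fintype.card F) := by
    intro x
    simp [frob]
  have h2 : frob F K (C e⁻¹ * L) = C e⁻¹ * L := by
    rw [map_mul, hC, hcL, ← mul_assoc, ← C_mul, inv_pow, h1]
    congr 2
    field_simp
  have hL1 : C e⁻¹ * L ≠ 0 := mul_ne_zero (by simpa using he) h0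
  have hS : MvPolynomial.map (algebraMap F K) S = (C e⁻¹ * L) * (C e * B) := by
    rw [hB]
    have : (C e⁻¹ * C e : MvPolynomial (Fin 3) K) = 1 := by
      rw [← C_mul, inv_mul_cancel₀ he, C_1]
    linear_combination (- L * B) * this
  have h3 : frob F K (C e * B) = C e * B := by
    have := frob_base F K S
    rw [hS, map_mul, h2] at this
    exact mul_left_cancel₀ hL1 this
  obtain ⟨L0, hL0⟩ := descend F K h2
  obtain ⟨B0, hB0⟩ := descend F K h3
  have hinj := map_injective (σ := Fin 3) _ (algebraMap F K).injective
  refine ⟨L0, ?_, B0, ?_⟩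
  · apply IsHomogeneous.of_map (algebraMap F K).injective
    rw [hL0]
    exact h.C_mul _
  · apply hinj
    rw [map_mul, hL0, hB0, hS]

end frob

lemma v_ne {F : Type*} [Field F] {v : MvPolynomial (Fin 2) F} (hv : v.IsHomogeneous 2)
    (hv0 : MvPolynomial.aeval ![Polynomial.X, 0] v ≠ (0 : Polynomial F)) :
    eval ![1, 0] v ≠ 0 := by
  intro h
  apply hv0
  have : MvPolynomial.aeval ![Polynomial.X, 0] v =
      (Polynomial.C (eval ![1, 0] v) * Polynomial.X ^ 2 : Polynomial F) := by
    rw [aeval_def, eval₂_eq', eval_eq', map_sum, Finset.sum_mul]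
    refine Finset.sum_congr rfl fun d hd => ?_
    have hd2 : d 0 + d 1 = 2 := by
      have := by_contra fun hh => mem_support_iff.mp hd (hv.coeff_eq_zero hh)
      rw [Finsupp.degree_eq_sum, Fin.sum_univ_two] at this
      exact this
    simp only [Fin.prod_univ_two]
    by_cases h1 : d 1 = 0
    · have : d 0 = 2 := by omega
      simp [h1, this]
    · simp [h1]
  rw [this, h]
  simp

lemma nonconst {F K : Type*} [Field F] [Field K] [Algebra F K] [Infinite K]
    {u v w : MvPolynomial (Fin 2) F} (hv : eval ![1, 0] v ≠ 0) (k : K)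
    (h : ∀ x : K, eval ![x, 1, 0] (MvPolynomial.map (algebraMap F K)
      (X 0 ^ 2 * rename Fin.succ u + X 0 * rename Fin.succ v + rename Fin.succ w)) = k) :
    False := by
  have hr : ∀ (p : MvPolynomial (Fin 2) F) (x : K),
      eval ![x, 1, 0] (MvPolynomial.map (algebraMap F K) (rename Fin.succ p)) =
        algebraMap F K (eval ![1, 0] p) := by
    intro p x
    rw [map_rename, eval_rename]
    have : (![x, 1, 0] ∘ Fin.succ : Fin 2 → K) = algebraMap F K ∘ ![1, 0] := by
      ext i; fin_cases i <;> simp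
    rw [this, ← MvPolynomial.map_eval]
  simp only [map_add, map_mul, map_pow, map_X, eval_X, hr] at h
  have hV : algebraMap F K (eval ![1, 0] v) ≠ 0 := by simpa using hv
  classical
  obtain ⟨x, hx⟩ := Infinite.exists_notMem_finset ({0, 1} : Finset K)
  simp only [Finset.mem_insert, Finset.mem_singleton, not_or] at hx
  have e0 := h 0
  have e1 := h 1
  have ex := h x
  simp only [Matrix.cons_val_zero] at e0 e1 ex
  have : x * (1 - x) * algebraMap F K (eval ![1, 0] v) = 0 := by
    linear_combination ex - e0 - x ^ 2 * (e1 - e0)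
  rcases mul_eq_zero.mp this with h | h
  · rcases mul_eq_zero.mp h with h | h
    · exact hx.1 h
    · exact hx.2 (sub_eq_zero.mp h).symm
  · exact hV h

/-- A reducible cubic form has a linear factor. -/
lemma exists_lin {K : Type*} [Field K] {T : MvPolynomial (Fin 3) K} (hT : T.IsHomogeneous 3)
    (h0 : T ≠ 0) (hirr : ¬ Irreducible T) :
    ∃ L Q : MvPolynomial (Fin 3) K, L.IsHomogeneous 1 ∧ Q.IsHomogeneous 2 ∧ T = L * Q := by
  have hdeg := hT.totalDegree h0
  have hunit : ∀ A : MvPolynomial (Fin 3) K, A ≠ 0 → ¬ IsUnit A → 1 ≤ A.totalDegree := by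
    intro A hA hu
    by_contra hlt
    have h3 := totalDegree_eq_zero_iff_eq_C.mp (show A.totalDegree = 0 by omega)
    apply hu
    rw [h3]
    refine IsUnit.map C (isUnit_iff_ne_zero.mpr fun h => hA ?_)
    rw [h3, h, C_0]
  have hTu : ¬ IsUnit T := by
    intro h
    have := (MvPolynomial.isUnit_iff_totalDegree_of_isReduced.mp h).2
    omega
  have : ∃ A B, T = A * B ∧ ¬ IsUnit A ∧ ¬ IsUnit B := by
    by_contra hcon
    push Not at hcon
    exact hirr ⟨hTu, fun {a b} hab => by
      by_contra hh
      push Not at hh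
      exact hh.2 (hcon a b hab hh.1)⟩
  obtain ⟨A, B, rfl, hA, hB⟩ := this
  have hA0 := left_ne_zero_of_mul h0
  have hB0 := right_ne_zero_of_mul h0
  have hA1 := hunit A hA0 hA
  have hB1 := hunit B hB0 hB
  rw [totalDegree_mul_of_isDomain hA0 hB0] at hdeg
  rcases (show A.totalDegree = 1 ∧ B.totalDegree = 2 ∨ A.totalDegree = 2 ∧ B.totalDegree = 1 by
    omega) with ⟨h1, h2⟩ | ⟨h1, h2⟩
  · exact ⟨_, _, homogeneousComponent_isHomogeneous 1 A, homogeneousComponent_isHomogeneous 2 B,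
      (top_mul h1.le h2.le hT).symm⟩
  · refine ⟨_, _, homogeneousComponent_isHomogeneous 1 B, homogeneousComponent_isHomogeneous 2 A,
      ?_⟩
    rw [mul_comm A B] at hT ⊢
    exact (top_mul h2.le h1.le hT).symm

end SliceAux

open SliceAux in
/-- If the cubic form `S(X,Y,Z) = X²u(Y,Z) + Xv(Y,Z) + w(Y,Z)` with `v(Y,0) ≢ 0`
and `w(0,Z) ≢ 0` is not absolutely irreducible, then it has a linear factor over
`𝔽_q` which is not a scalar multiple of `Z`, and hence a zero with `Z ≠ 0`. -/
theorem slice_S_has_zero {F : Type*} [Field F] [Fintype F]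
    (u v w : MvPolynomial (Fin 2) F)
    (hu : u.IsHomogeneous 1) (hv : v.IsHomogeneous 2) (hw : w.IsHomogeneous 3)
    (hv0 : MvPolynomial.aeval ![Polynomial.X, 0] v ≠ (0 : Polynomial F))
    (hw0 : MvPolynomial.aeval ![0, Polynomial.X] w ≠ (0 : Polynomial F))
    (S : MvPolynomial (Fin 3) F)
    (hS : S = X 0 ^ 2 * rename Fin.succ u + X 0 * rename Fin.succ v + rename Fin.succ w)
    (hirr : ¬ Irreducible (MvPolynomial.map (algebraMap F (AlgebraicClosure F)) S)) :
    (∃ L : MvPolynomial (Fin 3) F, L.IsHomogeneous 1 ∧ L ∣ S ∧ ∀ c : F, L ≠ C c * X 2) ∧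
    ∃ x : Fin 3 → F, eval x S = 0 ∧ x 2 ≠ 0 := by
  classical
  have hSh : S.IsHomogeneous 3 := by
    rw [hS]
    refine IsHomogeneous.add (IsHomogeneous.add ?_ ?_) hw.rename_isHomogeneous
    · exact (isHomogeneous_X_pow 0 2).mul hu.rename_isHomogeneous
    · exact (isHomogeneous_X F 0).mul hv.rename_isHomogeneous
  have hv1 := v_ne hv hv0
  set K := AlgebraicClosure F
  set T := MvPolynomial.map (algebraMap F K) S with hTdef
  have hnc : ∀ k : K, (∀ x : K, eval ![x, 1, 0] T = k) → False := by
    intro k hk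
    refine nonconst (u := u) (w := w) hv1 k ?_
    rw [← hS]
    exact hk
  have hTh : T.IsHomogeneous 3 := hSh.map _
  have hT0 : T ≠ 0 := fun h => hnc 0 fun x => by rw [h, map_zero]
  have hTP : eval ![1, 0, 0] T = 0 := by
    have hr : ∀ (p : MvPolynomial (Fin 2) F) (n : ℕ), p.IsHomogeneous n → n ≠ 0 →
        eval ![1, 0, 0] (MvPolynomial.map (algebraMap F K) (rename Fin.succ p)) = 0 := by
      intro p n hp hn
      rw [map_rename, eval_rename]
      have h0 : (![1, 0, 0] ∘ Fin.succ : Fin 2 → K) = 0 := by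
        ext i; fin_cases i <;> simp
      rw [h0, eval_zero, constantCoeff_eq]
      exact (hp.map _).coeff_eq_zero (by simpa using hn.symm)
    rw [hTdef, hS]
    simp only [map_add, map_mul, hr u 1 hu (by norm_num), hr v 2 hv (by norm_num),
      hr w 3 hw (by norm_num), mul_zero, add_zero]
  have hmain : ∃ L0 : MvPolynomial (Fin 3) F, L0.IsHomogeneous 1 ∧ L0 ∣ S := by
    obtain ⟨L, Q, hL, hQ, hLQ⟩ := exists_lin hTh hT0 hirr
    have hL0 : L ≠ 0 := by rintro rfl; exact hT0 (by rw [hLQ, zero_mul])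
    have hne : ∀ {P : MvPolynomial (Fin 3) K}, P ≠ 0 → frob F K P ≠ 0 := by
      intro P hP
      rwa [Ne, map_eq_zero_iff _ (frob_inj F K)]
    have hsL := frob_hom F K hL
    have hsL0 := hne hL0
    have hsT : frob F K T = T := frob_base F K S
    have hdvd : frob F K L ∣ L * Q := by
      rw [← hLQ, ← hsT, hLQ, map_mul]
      exact dvd_mul_right _ _
    rcases (lin_irred hsL hsL0).prime.dvd_or_dvd hdvd with h | h
    · exact lin_descend F K hL hL0 hLQ ((lin_irred hsL hsL0).dvd_symm (lin_irred hL hL0) h)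
    obtain ⟨M', hM'⟩ := h
    have hQ0 : Q ≠ 0 := by rintro rfl; exact hT0 (by rw [hLQ, mul_zero])
    have hM'0 : M' ≠ 0 := by rintro rfl; exact hQ0 (by rw [hM', mul_zero])
    have hdM : M'.totalDegree = 1 := by
      have := hQ.totalDegree hQ0
      rw [hM', totalDegree_mul_of_isDomain hsL0 hM'0, hsL.totalDegree hsL0] at this
      omega
    have hM1 : M' = homogeneousComponent 1 M' := by
      have h1 := top_mul (hsL.totalDegree hsL0).le hdM.le (by rw [← hM']; exact hQ)
      rw [homogeneousComponent_of_mem hsL, if_pos rfl] at h1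
      exact (mul_left_cancel₀ hsL0 h1).symm
    have hM : M'.IsHomogeneous 1 := by
      rw [hM1]; exact homogeneousComponent_isHomogeneous 1 M'
    have hssL := frob_hom F K hsL
    have hssL0 := hne hsL0
    have hTe : T = L * frob F K L * M' := by rw [hLQ, hM', mul_assoc]
    have hcomm : L * M' = frob F K (frob F K L) * frob F K M' := by
      apply mul_left_cancel₀ hsL0
      have h2 := hsT
      rw [hTe, map_mul, map_mul] at h2
      linear_combination -h2
    have hMd : M' ∣ frob F K (frob F K L) * frob F K M' := by
      rw [← hcomm]; exact dvd_mul_left _ _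
    rcases (lin_irred hM hM'0).prime.dvd_or_dvd hMd with h | h
    · exfalso
      obtain ⟨c, hc, hcM⟩ := lin_dvd hM hM'0 hssL hssL0 h
      obtain ⟨a, b, d, hab⟩ := lin_form hL
      have hs1 : frob F K L = C (a ^ Fintype.card F) * X 0 + C (b ^ Fintype.card F) * X 1 +
          C (d ^ Fintype.card F) * X 2 := by
        rw [hab]; simp [frob]
      have hs2 : frob F K (frob F K L) = C ((a ^ Fintype.card F) ^ Fintype.card F) * X 0 +
          C ((b ^ Fintype.card F) ^ Fintype.card F) * X 1 +
          C ((d ^ Fintype.card F) ^ Fintype.card F) * X 2 := by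
        rw [hs1]; simp [frob]
      have hprod : C c * T = L * frob F K L * frob F K (frob F K L) := by
        rw [hcM, hTe]; ring
      rw [hs2, hs1, hab] at hprod
      have ha : a = 0 := by
        have h3 := congrArg (eval ![1, 0, 0]) hprod
        rw [map_mul, hTP] at h3
        simpa [Fintype.card_ne_zero] using h3.symm
      refine hnc (c⁻¹ * (b * b ^ Fintype.card F * (b ^ Fintype.card F) ^ Fintype.card F))
        fun x => ?_
      have h3 := congrArg (eval ![x, 1, 0]) hprod
      simp only [map_add, map_mul, eval_C, eval_X, ha] at h3
      rw [eq_inv_mul_iff_mul_eq₀ hc]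
      simpa [Fintype.card_ne_zero] using h3
    · exact lin_descend F K hM hM'0 (by rw [← hTdef, hTe, mul_comm]) h
  obtain ⟨L, hL, hLS⟩ := hmain
  have hnZ : ∀ c : F, L ≠ C c * X 2 := by
    rintro c rfl
    obtain ⟨B, hB⟩ := hLS
    refine hnc 0 fun x => ?_
    rw [hTdef, hB]
    simp
  refine ⟨⟨L, hL, hLS, hnZ⟩, ?_⟩
  obtain ⟨B, hB⟩ := hLS
  obtain ⟨a, b, c, habc⟩ := lin_form hL
  have hx : ∃ x y : F, a * x + b * y + c = 0 := by
    by_cases ha : a = 0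
    · by_cases hb : b = 0
      · exact absurd (by rw [habc, ha, hb]; simp) (hnZ c)
      · exact ⟨0, -c / b, by field_simp; ring⟩
    · exact ⟨-c / a, 0, by field_simp; ring⟩
  obtain ⟨x, y, hxy⟩ := hx
  refine ⟨![x, y, 1], ?_, by simp⟩
  rw [hB, map_mul, habc]
  simp [hxy]
end

section
/- Let f ∈ 𝔽_q[x₀,…,x_n] be an absolutely irreducible polynomial of degree d ≥ 2. For ξ ∈ 𝔽_q^{3n+1}, define the plane-slice polynomial f|_ξ(X,Y) = f(ξ₀+X, ξ₁+ξ_{n+1}X+ξ_{2n+1}Y, …, ξ_n+ξ_{2n}X+ξ_{3n}Y). Then the number of ξ ∈ 𝔽_q^{3n+1} for which f|_ξ is not absolutely irreducible is at most (1/2)(3d⁴ − 4d³ + 5d²)·q^{3n}. -/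
open MvPolynomial

namespace CM

/-- restriction of `f` to the line `ν + X v` -/
noncomputable def lin {K : Type*} [CommRing K] {n : ℕ} {R : Type*} [CommRing R] [Algebra K R]
    (f : MvPolynomial (Fin n) K) (ν v : Fin n → R) : Polynomial R :=
  MvPolynomial.aeval (fun i => Polynomial.C (ν i) + Polynomial.C (v i) * Polynomial.X) f

section lin
variable {K : Type*} [Field K] {n : ℕ} {R S : Type*} [CommRing R] [Algebra K R]
  [CommRing S] [Algebra K S]

theorem lin_map (f : MvPolynomial (Fin n) K) (ν v : Fin n → R) (φ : R →ₐ[K] S) :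
    (lin f ν v).map (φ : R →+* S) = lin f (fun i => φ (ν i)) (fun i => φ (v i)) := by
  unfold lin
  rw [← Polynomial.coe_mapRingHom]
  have : (Polynomial.mapRingHom (φ : R →+* S)) = ((Polynomial.mapAlgHom φ : _ →ₐ[K] _) : _ →+* _) := by
    ext <;> simp
  rw [this, AlgHom.coe_toRingHom, MvPolynomial.comp_aeval_apply]
  congr 2
  ext i; simp

theorem lin_eval (f : MvPolynomial (Fin n) K) (ν v : Fin n → R) (p : R) :
    (lin f ν v).eval p = MvPolynomial.aeval (fun i => ν i + v i * p) f := by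
  unfold lin
  have : Polynomial.eval p (MvPolynomial.aeval (fun i => Polynomial.C (ν i) + Polynomial.C (v i) * Polynomial.X) f)
     = ((Polynomial.aeval p : Polynomial R →ₐ[R] R).restrictScalars K) (MvPolynomial.aeval (fun i => Polynomial.C (ν i) + Polynomial.C (v i) * Polynomial.X) f) := by
    simp [Polynomial.aeval_def, Polynomial.eval₂_eq_eval_map]
  rw [this, MvPolynomial.comp_aeval_apply]
  congr 2
  ext i; simp

theorem lin_derivative (f : MvPolynomial (Fin n) K) (ν v : Fin n → R) :
    (lin f ν v).derivative = ∑ i, Polynomial.C (v i) * lin (pderiv i f) ν v := by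
  unfold lin
  induction f using MvPolynomial.induction_on with
  | C a =>
    simp [Polynomial.algebraMap_apply]
  | add p q hp hq => simp [hp, hq, mul_add, Finset.sum_add_distrib]
  | mul_X p j hp =>
    rw [map_mul, aeval_X, Polynomial.derivative_mul, hp]
    simp only [Derivation.leibniz, smul_eq_mul, map_add, map_mul, aeval_X,
      Polynomial.derivative_mul,
      Polynomial.derivative_C, Polynomial.derivative_X, pderiv_X, mul_add, Finset.sum_add_distrib]
    have h1 : ∑ x, Polynomial.C (v x) * ((aeval fun i => Polynomial.C (ν i) + Polynomial.C (v i) * Polynomial.X) p *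
        (aeval fun i => Polynomial.C (ν i) + Polynomial.C (v i) * Polynomial.X)
          ((Pi.single x 1 : Fin n → MvPolynomial (Fin n) K) j)) =
        Polynomial.C (v j) * (aeval fun i => Polynomial.C (ν i) + Polynomial.C (v i) * Polynomial.X) p := by
      rw [Finset.sum_eq_single j]
      · simp
      · intro b _ hb
        rw [Pi.single_eq_of_ne' hb]; simp
      · simp
    rw [h1, add_comm, Finset.sum_mul, Finset.sum_mul, ← Finset.sum_add_distrib]
    congr 1
    · ring
    · refine Finset.sum_congr rfl fun i _ => ?_
      ring

/-- abstract degree bound for substitutions -/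
theorem aeval_fil {σ : Type*} (fil : ℕ → S → Prop)
    (hmono : ∀ a b x, a ≤ b → fil a x → fil b x)
    (hadd : ∀ a x y, fil a x → fil a y → fil a (x + y))
    (hmul : ∀ a b x y, fil a x → fil b y → fil (a + b) (x * y))
    (hC : ∀ c : K, fil 0 (algebraMap K S c))
    (s : σ → S) (hs : ∀ i, fil 1 (s i)) (f : MvPolynomial σ K) :
    fil f.totalDegree (MvPolynomial.aeval s f) := by
  have hpow : ∀ i k, fil k (s i ^ k) := by
    intro i k
    induction k with
    | zero => simpa using hC 1
    | succ k ih => rw [pow_succ]; exact hmul _ _ _ _ ih (hs i)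
  have hprod : ∀ (m : σ →₀ ℕ) (t : Finset σ), fil (∑ i ∈ t, m i) (∏ i ∈ t, s i ^ m i) := by
    classical
    intro m t
    induction t using Finset.induction_on with
    | empty => simpa using hC 1
    | insert a t ha ih =>
      rw [Finset.sum_insert ha, Finset.prod_insert ha]
      exact hmul _ _ _ _ (hpow _ _) ih
  have hsum : ∀ (T : Finset (σ →₀ ℕ)), (∀ m ∈ T, m ∈ f.support) →
      fil f.totalDegree (∑ m ∈ T, algebraMap K S (f.coeff m) * ∏ i ∈ m.support, s i ^ m i) := by
    classical
    intro T
    induction T using Finset.induction_on with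
    | empty => intro _; simpa using hmono _ _ _ (Nat.zero_le _) (hC 0)
    | insert a t ha ih =>
      intro h
      rw [Finset.sum_insert ha]
      refine hadd _ _ _ ?_ (ih fun m hm => h m (Finset.mem_insert_of_mem hm))
      refine hmono (0 + ∑ i ∈ a.support, a i) _ _ ?_ (hmul _ _ _ _ (hC _) (hprod a _))
      rw [zero_add]
      exact MvPolynomial.le_totalDegree (h a (Finset.mem_insert_self _ _))
  rw [MvPolynomial.aeval_def, MvPolynomial.eval₂_eq]
  exact hsum _ fun _ h => h

theorem coeff_prod_le {ι : Type*} (t : Finset ι) (g : ι → Polynomial R) (a : ι → ℕ)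
    (h : ∀ i, (g i).natDegree ≤ a i) :
    (∏ i ∈ t, g i).coeff (∑ i ∈ t, a i) = ∏ i ∈ t, (g i).coeff (a i) := by
  classical
  induction t using Finset.induction_on with
  | empty => simp
  | insert b t hb ih =>
    rw [Finset.sum_insert hb, Finset.prod_insert hb, Finset.prod_insert hb,
      Polynomial.coeff_mul_add_eq_of_natDegree_le (h b), ih]
    refine (Polynomial.natDegree_prod_le _ _).trans (Finset.sum_le_sum fun i _ => h i)

theorem natDegree_lin_factor (a b : R) : (Polynomial.C a + Polynomial.C b * Polynomial.X).natDegree ≤ 1 := by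
  rw [add_comm]
  exact Polynomial.natDegree_linear_le

theorem lin_natDegree (f : MvPolynomial (Fin n) K) (ν v : Fin n → R) :
    (lin f ν v).natDegree ≤ f.totalDegree := by
  unfold lin
  refine aeval_fil (S := Polynomial R) (fun k x => x.natDegree ≤ k) ?_ ?_ ?_ ?_ _ ?_ f
  · intro a b x h1 h2; exact h2.trans h1
  · intro a x y h1 h2; exact Polynomial.natDegree_add_le_of_degree_le h1 h2
  · intro a b x y h1 h2; exact Polynomial.natDegree_mul_le_of_le h1 h2
  · intro c; simp [Polynomial.algebraMap_apply]
  · intro i; exact natDegree_lin_factor _ _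

theorem lin_coeff (f : MvPolynomial (Fin n) K) (ν v : Fin n → R) (d : ℕ) (hd : f.totalDegree = d) :
    (lin f ν v).coeff d = MvPolynomial.aeval v (homogeneousComponent d f) := by
  classical
  unfold lin
  rw [MvPolynomial.aeval_def, MvPolynomial.eval₂_eq, Polynomial.finsetSum_coeff,
    homogeneousComponent_apply, map_sum, Finset.sum_filter]
  refine Finset.sum_congr rfl fun m hm => ?_
  rw [Polynomial.algebraMap_apply, Polynomial.coeff_C_mul]
  have hle : m.degree ≤ d := by
    rw [← hd]; exact MvPolynomial.le_totalDegree hm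
  have hfac : ∀ i, ((Polynomial.C (ν i) + Polynomial.C (v i) * Polynomial.X) ^ m i).natDegree ≤ m i := fun i => by
    simpa using Polynomial.natDegree_pow_le_of_le (m i) (natDegree_lin_factor (ν i) (v i))
  split_ifs with h
  · rw [aeval_monomial, Finsupp.prod]
    congr 1
    have := coeff_prod_le m.support (fun i => (Polynomial.C (ν i) + Polynomial.C (v i) * Polynomial.X) ^ m i) m hfac
    rw [← h]
    refine this.trans ?_
    refine Finset.prod_congr rfl fun i _ => ?_
    have := Polynomial.coeff_pow_of_natDegree_le (m := m i) (natDegree_lin_factor (ν i) (v i))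
    rw [mul_one] at this
    rw [this]; simp
  · rw [Polynomial.coeff_eq_zero_of_natDegree_lt, mul_zero]
    refine lt_of_le_of_lt ?_ (lt_of_le_of_ne hle h)
    exact (Polynomial.natDegree_prod_le _ _).trans (Finset.sum_le_sum fun i _ => hfac i)

end lin

/-- Hensel lifting inside a subring -/
theorem hensel {R : Type*} [CommRing R] (S : Subring (Polynomial R)) (G : Polynomial (Polynomial R))
    (hG : ∀ s ∈ S, G.eval s ∈ S) (a u : R) (ha : Polynomial.C a ∈ S)
    (h0 : (G.eval (Polynomial.C a)).coeff 0 = 0)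
    (h1 : (G.derivative.eval (Polynomial.C a)).coeff 0 * u = 1)
    (hS : ∀ s ∈ S, ∀ k, Polynomial.C (u * s.coeff k) * Polynomial.X ^ k ∈ S) (N : ℕ) :
    ∃ p ∈ S, p.coeff 0 = a ∧ Polynomial.X ^ (N + 1) ∣ G.eval p := by
  induction N with
  | zero =>
    refine ⟨_, ha, by simp, ?_⟩
    rw [zero_add, pow_one, Polynomial.X_dvd_iff]; exact h0
  | succ N ih =>
    obtain ⟨p, hp, hpa, w, hw⟩ := ih
    set c := (G.eval p).coeff (N + 1) with hc
    have hmem := hS _ (hG p hp) (N + 1)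
    refine ⟨p - Polynomial.C (u * c) * Polynomial.X ^ (N + 1), S.sub_mem hp hmem, ?_, ?_⟩
    · simp [hpa]
    · obtain ⟨k, hk⟩ := Polynomial.binomExpansion G p (- (Polynomial.C (u * c) * Polynomial.X ^ (N + 1)))
      rw [sub_eq_add_neg, hk, hw]
      have hcw : c = w.coeff 0 := by
        rw [hc, hw, Polynomial.coeff_X_pow_mul']; simp
      have key : (Polynomial.X : Polynomial R) ∣ w - G.derivative.eval p * Polynomial.C (u * c) := by
        rw [Polynomial.X_dvd_iff]
        have : (G.derivative.eval p).coeff 0 = (G.derivative.eval (Polynomial.C a)).coeff 0 := by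
          have hd := Polynomial.sub_dvd_eval_sub p (Polynomial.C a) G.derivative
          have hX : (Polynomial.X : Polynomial R) ∣ p - Polynomial.C a := by
            rw [Polynomial.X_dvd_iff]; simp [hpa]
          have := Polynomial.X_dvd_iff.1 (hX.trans hd)
          rw [Polynomial.coeff_sub] at this
          exact sub_eq_zero.1 this
        rw [Polynomial.coeff_sub, Polynomial.mul_coeff_zero, this, ← hcw, Polynomial.coeff_C_zero]
        linear_combination (-c) * h1
      obtain ⟨z, hz⟩ := key
      refine ⟨z + k * Polynomial.C (u * c) ^ 2 * Polynomial.X ^ N, ?_⟩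
      linear_combination Polynomial.X ^ (N+1) * hz
end CM

open MvPolynomial

namespace CM

/-- The shear change of variables, as an algebra equivalence. -/
noncomputable def shear {K : Type*} [Field K] {n : ℕ} (ν : Fin (n + 1) → K) (ω : Fin n → K) :
    MvPolynomial (Fin (n + 1)) K ≃ₐ[K] Polynomial (MvPolynomial (Fin n) K) :=
  AlgEquiv.ofAlgHom
    (MvPolynomial.aeval (fun i => Polynomial.C
        ((Fin.cons (C (ν 0)) (fun j => C (ν j.succ) + X j) : Fin (n + 1) → MvPolynomial (Fin n) K) i)
      + Polynomial.C (C ((Fin.cons 1 ω : Fin (n + 1) → K) i)) * Polynomial.X))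
    (Polynomial.eval₂AlgHom
      (MvPolynomial.aeval (fun j : Fin n => (X j.succ - C (ν j.succ) - C (ω j) * (X 0 - C (ν 0)) :
        MvPolynomial (Fin (n + 1)) K)))
      (X 0 - C (ν 0)) (fun _ => Commute.all _ _))
    (by
      ext i
      · simp [Polynomial.algebraMap_apply, MvPolynomial.algebraMap_eq]
        ring
      · simp [Polynomial.algebraMap_apply, MvPolynomial.algebraMap_eq])
    (by
      ext i
      refine Fin.cases ?_ (fun j => ?_) i
      · simp
      · simp [MvPolynomial.algebraMap_eq]
        ring)

theorem shear_apply {K : Type*} [Field K] {n : ℕ} (ν : Fin (n + 1) → K) (ω : Fin n → K)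
    (f : MvPolynomial (Fin (n + 1)) K) :
    shear ν ω f = lin f (Fin.cons (C (ν 0)) (fun j => C (ν j.succ) + X j) : Fin (n + 1) → MvPolynomial (Fin n) K)
      (fun i => C ((Fin.cons 1 ω : Fin (n + 1) → K) i)) := rfl

theorem lin_shear_irreducible {K : Type*} [Field K] {n : ℕ} (ν : Fin (n + 1) → K) (ω : Fin n → K)
    {f : MvPolynomial (Fin (n + 1)) K} (hf : Irreducible f) :
    Irreducible (lin f (Fin.cons (C (ν 0)) (fun j => C (ν j.succ) + X j) : Fin (n + 1) → MvPolynomial (Fin n) K)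
      (fun i => C ((Fin.cons 1 ω : Fin (n + 1) → K) i))) := by
  rw [← shear_apply]
  exact (MulEquiv.irreducible_iff (shear ν ω)).2 hf

theorem resultant_ne {R : Type*} [CommRing R] [IsDomain R] [UniqueFactorizationMonoid R]
    (G h : Polynomial R) (hG : Irreducible G) (d m : ℕ) (hd : G.natDegree = d)
    (hm : m < d) (hh : h ≠ 0) (hhm : h.natDegree ≤ m) : Polynomial.resultant G h d m ≠ 0 := by
  classical
  let _ : NormalizedGCDMonoid R := Classical.choice inferInstance
  have hprim : G.IsPrimitive := hG.isPrimitive (by omega)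
  let κ := FractionRing R
  have hirr := (hprim.irreducible_iff_irreducible_map_fraction_map (K := κ)).1 hG
  have hinj : Function.Injective (algebraMap R κ) := IsFractionRing.injective R κ
  intro h0
  have h1 := Polynomial.resultant_map_map G h d m (algebraMap R κ)
  rw [h0, map_zero] at h1
  have hdeg : (G.map (algebraMap R κ)).natDegree = d := by
    rw [Polynomial.natDegree_map_eq_of_injective hinj, hd]
  have hhdeg : (h.map (algebraMap R κ)).natDegree = h.natDegree :=
    Polynomial.natDegree_map_eq_of_injective hinj _
  have hh' : h.map (algebraMap R κ) ≠ 0 := (Polynomial.map_ne_zero_iff hinj).2 hh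
  obtain ⟨k, rfl⟩ := Nat.exists_eq_add_of_le hhm
  rw [Polynomial.resultant_add_right_deg _ _ _ _ _ hhdeg.le] at h1
  have hlead : (G.map (algebraMap R κ)).coeff d ≠ 0 := by
    rw [← hdeg]
    exact Polynomial.leadingCoeff_ne_zero.2 hirr.ne_zero
  have h2 := (mul_eq_zero.1 h1).resolve_left (pow_ne_zero _ hlead)
  have h3 : Polynomial.resultant (G.map (algebraMap R κ)) (h.map (algebraMap R κ)) = 0 := by
    rw [hdeg, hhdeg]; exact h2
  rw [Polynomial.resultant_eq_zero_iff] at h3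
  apply h3.2
  rw [hirr.coprime_iff_not_dvd]
  intro hdvd
  have := Polynomial.natDegree_le_of_dvd hdvd hh'
  omega

theorem det_fil {S : Type*} [CommRing S] {m : Type*} [Fintype m] [DecidableEq m] (fil : ℕ → S → Prop)
    (hadd : ∀ a x y, fil a x → fil a y → fil a (x + y))
    (hneg : ∀ a x, fil a x → fil a (-x))
    (hmul : ∀ a b x y, fil a x → fil b y → fil (a + b) (x * y))
    (h1 : fil 0 1) (h0 : ∀ a, fil a 0) (M : Matrix m m S) (b : m → ℕ) (hb : ∀ i j, fil (b j) (M i j)) :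
    fil (∑ j, b j) M.det := by
  rw [Matrix.det_apply]
  have hs : ∀ T : Finset (Equiv.Perm m), fil (∑ j, b j) (∑ σ ∈ T, Equiv.Perm.sign σ • ∏ i, M (σ i) i) := by
    intro T
    induction T using Finset.induction_on with
    | empty => simpa using h0 _
    | insert a t ha ih =>
      rw [Finset.sum_insert ha]
      refine hadd _ _ _ ?_ ih
      have hp : fil (∑ j, b j) (∏ i, M (a i) i) := by
        have : ∀ t : Finset m, fil (∑ j ∈ t, b j) (∏ i ∈ t, M (a i) i) := by
          intro t
          induction t using Finset.induction_on with
          | empty => simpa using h1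
          | insert x t hx ih =>
            rw [Finset.sum_insert hx, Finset.prod_insert hx]
            exact hmul _ _ _ _ (hb _ _) ih
        exact this _
      rcases Int.units_eq_one_or (Equiv.Perm.sign a) with h | h
      · rw [h, one_smul]; exact hp
      · rw [h]; simpa using hneg _ _ hp
  exact hs _

theorem exists_pderiv_ne {K : Type*} [Field K] [IsAlgClosed K] (p : ℕ) [Fact p.Prime] [CharP K p] {σ : Type*}
    {f : MvPolynomial σ K} (hf : Irreducible f) : ∃ i, pderiv i f ≠ 0 := by
  by_contra! h
  have hdiv : ∀ m ∈ f.support, ∀ i, p ∣ m i := by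
    intro m hm i
    by_contra hp
    have hmi : m i ≠ 0 := by rintro h; simp [h] at hp
    have := congrArg (coeff (m - Finsupp.single i 1)) (h i)
    rw [coeff_pderiv, coeff_zero] at this
    have hle : Finsupp.single i 1 ≤ m := by
      simpa [Finsupp.single_le_iff] using Nat.one_le_iff_ne_zero.2 hmi
    rw [tsub_add_cancel_of_le hle] at this
    rcases mul_eq_zero.1 this with h' | h'
    · exact (mem_support_iff.1 hm) h'
    · apply hp
      rw [← CharP.cast_eq_zero_iff K p]
      have h2 : ((m i - 1 : ℕ) : K) + 1 = 0 := by simpa using h'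
      rw [← Nat.cast_succ] at h2
      rwa [Nat.succ_eq_add_one, Nat.sub_add_cancel (Nat.one_le_iff_ne_zero.2 hmi)] at h2
  have hex : ∀ m ∈ f.support, ∃ σ', m = p • σ' := by
    intro m hm
    choose σ' hσ' using hdiv m hm
    exact ⟨⟨m.support, σ', by simp [hσ', (Fact.out : p.Prime).ne_zero]⟩, Finsupp.ext hσ'⟩
  choose! q hq using hex
  have hroot : ∀ a : K, ∃ b, b ^ p = a := fun a =>
    IsAlgClosed.exists_pow_nat_eq a (Fact.out : p.Prime).pos
  choose r hr using hroot
  have : ExpChar (MvPolynomial σ K) p := ExpChar.prime Fact.out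
  have : f = (∑ m ∈ f.support, monomial (q m) (r (f.coeff m))) ^ p := by
    rw [sum_pow_char]
    conv_lhs => rw [f.as_sum]
    refine Finset.sum_congr rfl fun m hm => ?_
    rw [monomial_pow, hr, ← hq m hm]
  rw [this] at hf
  exact not_irreducible_pow (Fact.out : p.Prime).ne_one hf

theorem exists_direction {K : Type*} [Field K] [Infinite K] {n : ℕ}
    (f : MvPolynomial (Fin (n + 1)) K) (d : ℕ) (hd : homogeneousComponent d f ≠ 0)
    (hp : ∃ i, pderiv i f ≠ 0) :
    ∃ ω : Fin n → K, eval (Fin.cons 1 ω : Fin (n + 1) → K) (homogeneousComponent d f) ≠ 0 ∧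
      ∑ i, C ((Fin.cons 1 ω : Fin (n + 1) → K) i) * pderiv i f ≠ 0 := by
  obtain ⟨i0, hi0⟩ := hp
  obtain ⟨m, hm⟩ := MvPolynomial.ne_zero_iff.1 hi0
  let Q : MvPolynomial (Fin (n + 1)) K := ∑ i, C (coeff m (pderiv i f)) * X i
  have hQ : Q ≠ 0 := by
    intro h
    have := congrArg (eval (Pi.single i0 1)) h
    simp [Q, Pi.single_apply] at this
    exact hm this
  have hprod : X 0 * homogeneousComponent d f * Q ≠ 0 := mul_ne_zero (mul_ne_zero (X_ne_zero _) hd) hQ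
  have : ∃ v, eval v (X 0 * homogeneousComponent d f * Q) ≠ 0 := by
    by_contra! h
    exact hprod (MvPolynomial.funext fun v => by rw [h v, map_zero])
  obtain ⟨v, hv⟩ := this
  simp only [map_mul, eval_X, ne_eq, mul_eq_zero, not_or] at hv
  obtain ⟨⟨hv0, hv1⟩, hv2⟩ := hv
  have hcons : (Fin.cons 1 (fun j => (v 0)⁻¹ * v j.succ) : Fin (n + 1) → K) = fun i => (v 0)⁻¹ * v i := by
    funext i
    refine Fin.cases ?_ (fun j => ?_) i <;> simp [hv0]
  refine ⟨fun j => (v 0)⁻¹ * v j.succ, ?_, ?_⟩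
  · rw [hcons]
    have hh := homogeneousComponent_isHomogeneous d f
    have : eval (fun i => (v 0)⁻¹ * v i) (homogeneousComponent d f) = ((v 0)⁻¹) ^ d * eval v (homogeneousComponent d f) := by
      rw [eval_eq, eval_eq, Finset.mul_sum]
      refine Finset.sum_congr rfl fun m hm => ?_
      have h1 := hh (mem_support_iff.1 hm)
      simp only [mul_pow, Finset.prod_mul_distrib]
      rw [Finset.prod_pow_eq_pow_sum]
      have : ∑ i ∈ m.support, m i = d := by
        rw [← h1]; simp [Finsupp.weight_apply, Finsupp.sum]
      rw [this]; ring
    rw [this]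
    exact mul_ne_zero (pow_ne_zero _ (inv_ne_zero hv0)) hv1
  · rw [hcons]
    intro h
    have := congrArg (coeff m) h
    rw [coeff_sum] at this
    simp only [coeff_C_mul, coeff_zero] at this
    apply hv2
    simp only [Q, map_sum, map_mul, eval_C, eval_X]
    have h2 : (v 0)⁻¹ * ∑ x, coeff m ((pderiv x) f) * v x = 0 := by
      rw [← this, Finset.mul_sum]
      refine Finset.sum_congr rfl fun i _ => ?_
      ring
    exact (mul_eq_zero.1 h2).resolve_left (inv_ne_zero hv0)

theorem exists_minor {R : Type*} [CommRing R] [IsDomain R] {m ι : Type*} [Fintype m] [Fintype ι]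
    [DecidableEq ι] (M : Matrix m ι R) (h : ∀ c : ι → R, M.mulVec c = 0 → c = 0) :
    ∃ r : ι → m, (M.submatrix r id).det ≠ 0 := by
  classical
  let κ := FractionRing R
  let A : Matrix m ι κ := M.map (algebraMap R κ)
  have hinj : Function.Injective (algebraMap R κ) := IsFractionRing.injective R κ
  have hA : ∀ c : ι → κ, A.mulVec c = 0 → c = 0 := by
    intro c hc
    obtain ⟨b, hb⟩ := IsLocalization.exist_integer_multiples_of_finite (nonZeroDivisors R) c
    choose e he using hb
    have hb0 : algebraMap R κ b ≠ 0 := IsFractionRing.to_map_ne_zero_of_mem_nonZeroDivisors b.2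
    have : M.mulVec e = 0 := by
      funext k
      apply hinj
      have h1 := congrFun hc k
      simp only [Matrix.mulVec, dotProduct, A, Matrix.map_apply, Pi.zero_apply] at h1 ⊢
      rw [map_sum, map_zero]
      have : ∑ x, algebraMap R κ (M k x * e x) = algebraMap R κ b * ∑ x, algebraMap R κ (M k x) * c x := by
        rw [Finset.mul_sum]
        refine Finset.sum_congr rfl fun i _ => ?_
        have h3 := he i
        rw [map_mul, h3, Algebra.smul_def]; ring
      rw [this, h1, mul_zero]
    have he0 := h e this
    funext i
    have h3 := he i
    rw [he0, Algebra.smul_def] at h3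
    simp only [Pi.zero_apply, map_zero] at h3
    exact (mul_eq_zero.1 h3.symm).resolve_left hb0
  have hrank : A.rank = Fintype.card ι := by
    have hk : LinearMap.ker A.mulVecLin = ⊥ := by
      rw [LinearMap.ker_eq_bot']
      intro c hc
      exact hA c (by simpa using hc)
    have := LinearMap.finrank_range_add_finrank_ker A.mulVecLin
    rw [hk, finrank_bot, add_zero, Module.finrank_fintype_fun_eq_card] at this
    exact this
  rw [Matrix.rank_eq_finrank_span_row] at hrank
  obtain ⟨κ', a, ha, hspan, hli⟩ := exists_linearIndependent' κ A.row
  have : Fintype κ' := Fintype.ofInjective a ha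
  have hcard : Fintype.card κ' = Fintype.card ι := by
    rw [← hrank, ← hspan, finrank_span_eq_card hli]
  let e : ι ≃ κ' := (Fintype.equivOfCardEq hcard).symm
  refine ⟨fun i => a (e i), ?_⟩
  have hli2 : LinearIndependent κ (A.submatrix (fun i => a (e i)) id).row := by
    have := hli.comp e e.injective
    exact this
  have hu : IsUnit (A.submatrix (fun i => a (e i)) id) := Matrix.linearIndependent_rows_iff_isUnit.1 hli2
  have hdet := ((Matrix.isUnit_iff_isUnit_det _).1 hu).ne_zero
  intro h0
  apply hdet
  have : A.submatrix (fun i => a (e i)) id = (M.submatrix (fun i => a (e i)) id).map (algebraMap R κ) := rfl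
  rw [this, ← RingHom.mapMatrix_apply, ← RingHom.map_det, h0, map_zero]

theorem zippel {F K : Type*} [Field F] [Fintype F] [Field K] (φ : F →+* K) {σ : Type*} [Fintype σ]
    (P : MvPolynomial σ K) (hP : P ≠ 0) :
    Nat.card {x : σ → F // eval (fun i => φ (x i)) P = 0} * Fintype.card F
      ≤ P.totalDegree * Fintype.card F ^ Fintype.card σ := by
  classical
  let e := Fintype.equivFin σ
  let S : Finset K := Finset.univ.image φ
  have hS : S.card = Fintype.card F := by
    rw [Finset.card_image_of_injective _ φ.injective, Finset.card_univ]
  have hP' : rename e P ≠ 0 := by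
    intro h; exact hP (rename_injective e e.injective (by rw [h, map_zero]))
  have hz := schwartz_zippel_totalDegree hP' S
  have hq : (0 : ℚ≥0) < (Fintype.card F : ℚ≥0) := by exact_mod_cast Fintype.card_pos
  rw [hS, div_le_div_iff₀ (by positivity) hq] at hz
  have hdeg : (rename e P).totalDegree ≤ P.totalDegree := totalDegree_rename_le _ _
  have hle : Nat.card {x : σ → F // eval (fun i => φ (x i)) P = 0} ≤
      (Finset.filter (fun f => eval f (rename e P) = 0) (Fintype.piFinset fun _ => S)).card := by
    rw [Nat.card_eq_fintype_card, Fintype.card_subtype]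
    refine Finset.card_le_card_of_injOn (fun x i => φ (x (e.symm i))) ?_ ?_
    · intro x hx
      simp only [Finset.coe_filter, Finset.mem_univ, true_and, Set.mem_ofPred_eq] at hx
      simp only [Finset.coe_filter, Set.mem_ofPred_eq, Fintype.mem_piFinset]
      refine ⟨fun i => Finset.mem_image_of_mem _ (Finset.mem_univ _), ?_⟩
      rw [eval_rename]
      have he : ((fun i => φ (x (e.symm i))) ∘ e) = fun i => φ (x i) := by funext i; simp
      rw [he]; exact hx
    · intro x _ y _ hxy
      funext i
      have := congrFun hxy (e i)
      exact φ.injective (by simpa using this)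
  have h2 : (Finset.filter (fun f => eval f (rename e P) = 0) (Fintype.piFinset fun _ => S)).card * Fintype.card F
      ≤ (rename e P).totalDegree * Fintype.card F ^ Fintype.card σ := by exact_mod_cast hz
  calc _ ≤ _ := Nat.mul_le_mul_right _ hle
    _ ≤ _ := h2
    _ ≤ _ := Nat.mul_le_mul_right _ hdeg
end CM

open MvPolynomial

namespace CM

theorem sylv_entry {S : Type*} [CommRing S] (fil : ℕ → S → Prop) (h0 : ∀ a, fil a 0)
    (G h : Polynomial S) (m n a b : ℕ) (hG : ∀ k, fil a (G.coeff k)) (hh : ∀ k, fil b (h.coeff k))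
    (i j : Fin (m + n)) :
    fil ((Fin.addCases (fun _ => b) (fun _ => a) j : ℕ)) (Polynomial.sylvester G h m n i j) := by
  rw [Polynomial.sylvester, Matrix.of_apply]
  refine Fin.addCases (fun j => ?_) (fun j => ?_) j
  · rw [Fin.addCases_left, Fin.addCases_left]
    split_ifs
    · exact hh _
    · exact h0 _
  · rw [Fin.addCases_right, Fin.addCases_right]
    split_ifs
    · exact hG _
    · exact h0 _

theorem res_fil {S : Type*} [CommRing S] (fil : ℕ → S → Prop)
    (hadd : ∀ a x y, fil a x → fil a y → fil a (x + y))
    (hneg : ∀ a x, fil a x → fil a (-x))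
    (hmul : ∀ a b x y, fil a x → fil b y → fil (a + b) (x * y))
    (h1 : fil 0 1) (h0 : ∀ a, fil a 0)
    (G h : Polynomial S) (m n a b : ℕ) (hG : ∀ k, fil a (G.coeff k)) (hh : ∀ k, fil b (h.coeff k)) :
    fil (m * b + n * a) (Polynomial.resultant G h m n) := by
  have := det_fil fil hadd hneg hmul h1 h0 (Polynomial.sylvester G h m n) _
    (sylv_entry fil h0 G h m n a b hG hh)
  rw [Fin.sum_univ_add] at this
  rw [Polynomial.resultant]
  simpa using this

theorem coeff_fil_mul {S : Type*} [CommRing S] (fil : ℕ → S → Prop)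
    (hadd : ∀ a x y, fil a x → fil a y → fil a (x + y))
    (hmul : ∀ a b x y, fil a x → fil b y → fil (a + b) (x * y)) (h0 : ∀ a, fil a 0)
    (a b : ℕ) (x y : Polynomial S) (hx : ∀ k, fil a (x.coeff k)) (hy : ∀ k, fil b (y.coeff k)) (k : ℕ) :
    fil (a + b) ((x * y).coeff k) := by
  classical
  rw [Polynomial.coeff_mul]
  have : ∀ T : Finset (ℕ × ℕ), fil (a + b) (∑ z ∈ T, x.coeff z.1 * y.coeff z.2) := by
    intro T
    induction T using Finset.induction_on with
    | empty => simpa using h0 _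
    | insert z t hz ih =>
      rw [Finset.sum_insert hz]
      exact hadd _ _ _ (hmul _ _ _ _ (hx _) (hy _)) ih
  exact this _

/-- coefficients of `lin` lie in filtration level `totalDegree f` -/
theorem lin_coeff_fil {K : Type*} [Field K] {n : ℕ} {S : Type*} [CommRing S] [Algebra K S]
    (fil : ℕ → S → Prop)
    (hmono : ∀ a b x, a ≤ b → fil a x → fil b x)
    (hadd : ∀ a x y, fil a x → fil a y → fil a (x + y))
    (hmul : ∀ a b x y, fil a x → fil b y → fil (a + b) (x * y)) (h0 : ∀ a, fil a 0)
    (hC : ∀ c : K, fil 0 (algebraMap K S c))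
    (f : MvPolynomial (Fin n) K) (ν v : Fin n → S) (hν : ∀ i, fil 1 (ν i)) (hv : ∀ i, fil 1 (v i)) (k : ℕ) :
    fil f.totalDegree ((lin f ν v).coeff k) := by
  unfold lin
  refine aeval_fil (S := Polynomial S) (fun a x => ∀ k, fil a (x.coeff k)) ?_ ?_ ?_ ?_ _ ?_ f k
  · intro a b x h1 h2 k; exact hmono _ _ _ h1 (h2 k)
  · intro a x y h1 h2 k; rw [Polynomial.coeff_add]; exact hadd _ _ _ (h1 k) (h2 k)
  · intro a b x y h1 h2 k; exact coeff_fil_mul fil hadd hmul h0 a b x y h1 h2 k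
  · intro c k
    rw [Polynomial.algebraMap_apply, Polynomial.coeff_C]
    split_ifs
    · exact hC _
    · exact h0 _
  · intro i k
    rw [Polynomial.coeff_add, Polynomial.coeff_C_mul, Polynomial.coeff_C, Polynomial.coeff_X]
    refine hadd _ _ _ ?_ ?_
    · split_ifs
      · exact hν i
      · exact h0 _
    · split_ifs
      · rw [mul_one]; exact hv i
      · rw [mul_zero]; exact h0 _

theorem kernel_zero {R : Type*} [CommRing R] [IsDomain R] [UniqueFactorizationMonoid R]
    (G h : Polynomial (Polynomial R)) (d : ℕ) (hd : 2 ≤ d) (hG : Irreducible G) (hGd : G.natDegree = d)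
    (hGc : ∀ k, (G.coeff k).natDegree ≤ d) (hhd : h.natDegree ≤ d - 1)
    (hhc : ∀ k, (h.coeff k).natDegree ≤ d - 1) (p : Polynomial R)
    (h1 : Polynomial.X ^ (2 * (d * (d - 1)) + 1) ∣ G.eval p)
    (h2 : Polynomial.X ^ (2 * (d * (d - 1)) + 1) ∣ h.eval p) : h = 0 := by
  by_contra hh
  have hne := resultant_ne G h hG d (d - 1) hGd (by omega) hh hhd
  obtain ⟨A, B, -, -, hAB⟩ := Polynomial.exists_mul_add_mul_eq_C_resultant (m := d) (n := d - 1) G h hGd.le hhd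
    (Or.inl (by omega))
  have hdeg := res_fil (S := Polynomial R) (fun k x => x.natDegree ≤ k)
    (fun a x y h1 h2 => Polynomial.natDegree_add_le_of_degree_le h1 h2)
    (fun a x h => by rwa [Polynomial.natDegree_neg])
    (fun a b x y h1 h2 => Polynomial.natDegree_mul_le_of_le h1 h2)
    (by simp) (by simp) G h d (d - 1) d (d - 1) hGc hhc
  have hdvd : Polynomial.X ^ (2 * (d * (d - 1)) + 1) ∣ Polynomial.resultant G h d (d - 1) := by
    have := congrArg (Polynomial.eval p) hAB
    rw [Polynomial.eval_C, Polynomial.eval_add, Polynomial.eval_mul, Polynomial.eval_mul] at this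
    rw [← this]
    exact dvd_add (h1.mul_right _) (h2.mul_right _)
  have := Polynomial.natDegree_le_of_dvd hdvd hne
  rw [Polynomial.natDegree_X_pow] at this
  have h3 : (d - 1) * d = d * (d - 1) := mul_comm _ _
  simp only [h3] at hdeg
  omega

theorem exists_disc {K : Type*} [Field K] [IsAlgClosed K] (p : ℕ) [Fact p.Prime] [CharP K p] {n : ℕ}
    {f : MvPolynomial (Fin (n + 1)) K} (hf : Irreducible f) (d : ℕ) (hd : f.totalDegree = d) (hd2 : 2 ≤ d) :
    ∃ P : MvPolynomial (Fin (n + 1) ⊕ Fin n) K, P ≠ 0 ∧ P.totalDegree ≤ d * d + (d - 1) * d ∧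
      ∀ ν ω, eval (Sum.elim ν ω) P ≠ 0 →
        (lin f ν (Fin.cons 1 ω : Fin (n + 1) → K)).coeff d ≠ 0 ∧
        ∃ α, (lin f ν (Fin.cons 1 ω : Fin (n + 1) → K)).eval α = 0 ∧
          (lin f ν (Fin.cons 1 ω : Fin (n + 1) → K)).derivative.eval α ≠ 0 := by
  let g : Polynomial (MvPolynomial (Fin (n + 1) ⊕ Fin n) K) :=
    lin f (fun i => X (Sum.inl i)) (Fin.cons 1 (fun j => X (Sum.inr j)))
  let P := Polynomial.resultant g g.derivative d (d - 1)
  have hev : ∀ ν ω, eval (Sum.elim ν ω) P = Polynomial.resultant (lin f ν (Fin.cons 1 ω : Fin (n + 1) → K))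
      (lin f ν (Fin.cons 1 ω : Fin (n + 1) → K)).derivative d (d - 1) := by
    intro ν ω
    have hm : g.map (eval (Sum.elim ν ω)) = lin f ν (Fin.cons 1 ω : Fin (n + 1) → K) := by
      have := lin_map f (fun i => X (Sum.inl i)) (Fin.cons 1 (fun j => X (Sum.inr j)))
        (MvPolynomial.aeval (Sum.elim ν ω) : MvPolynomial (Fin (n + 1) ⊕ Fin n) K →ₐ[K] K)
      refine Eq.trans ?_ (this.trans ?_)
      · congr 1
      · congr 1
        · funext i; simp
        · funext i
          refine Fin.cases ?_ (fun j => ?_) i <;> simp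
    rw [← hm, Polynomial.derivative_map, Polynomial.resultant_map_map]
  refine ⟨P, ?_, ?_, ?_⟩
  · have hd0 : homogeneousComponent d f ≠ 0 := by
      intro h0
      have hf0 : f ≠ 0 := hf.ne_zero
      obtain ⟨m, hm, hmd⟩ := Finset.exists_mem_eq_sup f.support (support_nonempty.2 hf0) (fun s => s.sum fun _ e => e)
      have := congrArg (coeff m) h0
      rw [coeff_homogeneousComponent, if_pos (show m.degree = d from hmd.symm.trans hd)] at this
      exact (mem_support_iff.1 hm) (by simpa using this)
    obtain ⟨ω, h1, h2⟩ := exists_direction f d hd0 (exists_pderiv_ne p hf)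
    set G := lin f (Fin.cons (C ((0 : Fin (n+1) → K) 0)) (fun j => C ((0 : Fin (n+1) → K) j.succ) + X j) : Fin (n + 1) → MvPolynomial (Fin n) K)
      (fun i => C ((Fin.cons 1 ω : Fin (n + 1) → K) i)) with hGdef
    have hGi : Irreducible G := lin_shear_irreducible 0 ω hf
    have hGc : G.coeff d ≠ 0 := by
      rw [hGdef, lin_coeff f _ _ d hd]
      have : (MvPolynomial.aeval fun i => (C ((Fin.cons 1 ω : Fin (n + 1) → K) i) : MvPolynomial (Fin n) K)) (homogeneousComponent d f)
          = C (eval (Fin.cons 1 ω : Fin (n + 1) → K) (homogeneousComponent d f)) := by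
        have := MvPolynomial.aeval_algebraMap_apply (MvPolynomial (Fin n) K) (Fin.cons 1 ω : Fin (n + 1) → K) (homogeneousComponent d f)
        exact this
      rw [this]
      simpa using h1
    have hGd : G.natDegree = d := by
      apply le_antisymm
      · rw [← hd]; exact lin_natDegree _ _ _
      · exact Polynomial.le_natDegree_of_ne_zero hGc
    have hG' : G.derivative ≠ 0 := by
      have : G.derivative = shear 0 ω (∑ i, C ((Fin.cons 1 ω : Fin (n + 1) → K) i) * pderiv i f) := by
        rw [hGdef, lin_derivative, map_sum]
        refine Finset.sum_congr rfl fun i _ => ?_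
        have hc : ∀ a, shear (0 : Fin (n+1) → K) ω (C a) = Polynomial.C (C a) := (shear 0 ω).commutes
        rw [map_mul, shear_apply _ _ (pderiv i f), hc]
      rw [this]
      exact (map_ne_zero_iff _ (shear 0 ω).injective).2 h2
    have hr := resultant_ne G G.derivative hGi d (d - 1) hGd (by omega) hG'
      ((Polynomial.natDegree_derivative_le G).trans (by omega))
    have : ∃ z, eval z (Polynomial.resultant G G.derivative d (d - 1)) ≠ 0 := by
      by_contra! h
      exact hr (MvPolynomial.funext fun v => by rw [h v, map_zero])
    obtain ⟨z, hz⟩ := this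
    intro hP
    apply hz
    have hm : G.map (eval z) = lin f (Fin.cons 0 z) (Fin.cons 1 ω : Fin (n + 1) → K) := by
      have := lin_map f (Fin.cons (C ((0 : Fin (n+1) → K) 0)) (fun j => C ((0 : Fin (n+1) → K) j.succ) + X j) : Fin (n + 1) → MvPolynomial (Fin n) K)
        (fun i => C ((Fin.cons 1 ω : Fin (n + 1) → K) i))
        (MvPolynomial.aeval z : MvPolynomial (Fin n) K →ₐ[K] K)
      refine Eq.trans ?_ (this.trans ?_)
      · congr 1
      · congr 1
        · funext i
          refine Fin.cases ?_ (fun j => ?_) i <;> simp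
        · funext i
          simp
    have h3 := hev (Fin.cons 0 z) ω
    rw [← hm, Polynomial.derivative_map, Polynomial.resultant_map_map, hP, map_zero] at h3
    exact h3.symm
  · have hgc : ∀ k, (g.coeff k).totalDegree ≤ d := by
      intro k
      rw [← hd]
      refine lin_coeff_fil (fun a (x : MvPolynomial (Fin (n + 1) ⊕ Fin n) K) => x.totalDegree ≤ a) ?_ ?_ ?_ ?_ ?_ f _ _ ?_ ?_ k
      · intro a b x h1 h2; exact h2.trans h1
      · intro a x y h1 h2; exact (totalDegree_add _ _).trans (max_le h1 h2)
      · intro a b x y h1 h2; exact (totalDegree_mul _ _).trans (add_le_add h1 h2)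
      · intro a; simp
      · intro c; simp [MvPolynomial.algebraMap_eq]
      · intro i; simp
      · intro i; refine Fin.cases ?_ (fun j => ?_) i <;> simp
    refine res_fil (fun a (x : MvPolynomial (Fin (n + 1) ⊕ Fin n) K) => x.totalDegree ≤ a) ?_ ?_ ?_ ?_ ?_ g g.derivative d (d - 1) d d hgc ?_
    · intro a x y h1 h2; exact (totalDegree_add _ _).trans (max_le h1 h2)
    · intro a x h; rwa [totalDegree_neg]
    · intro a b x y h1 h2; exact (totalDegree_mul _ _).trans (add_le_add h1 h2)
    · simp
    · simp
    · intro k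
      rw [Polynomial.coeff_derivative]
      refine (totalDegree_mul _ _).trans ?_
      have : (((k : MvPolynomial (Fin (n + 1) ⊕ Fin n) K) + 1)).totalDegree = 0 := by
        have : ((k : MvPolynomial (Fin (n + 1) ⊕ Fin n) K) + 1) = C ((k : K) + 1) := by simp
        rw [this, totalDegree_C]
      rw [this, add_zero]
      exact hgc _
  · intro ν ω hP
    rw [hev] at hP
    set g0 := lin f ν (Fin.cons 1 ω : Fin (n + 1) → K)
    have hg0 : g0.natDegree ≤ d := by rw [← hd]; exact lin_natDegree _ _ _
    have hg0' := Polynomial.natDegree_derivative_le g0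
    have hc : g0.coeff d ≠ 0 := by
      intro h0
      have hlt : g0.natDegree < d := by
        refine lt_of_le_of_ne hg0 fun h => ?_
        rw [← h] at h0
        have : g0 = 0 := Polynomial.leadingCoeff_eq_zero.1 h0
        rw [this] at h; simp at h; omega
      exact hP (Polynomial.resultant_eq_zero_of_lt_lt _ _ _ _ hlt (by omega))
    refine ⟨hc, ?_⟩
    have hdeg : g0.degree ≠ 0 := by
      intro h
      have := Polynomial.natDegree_eq_zero_iff_degree_le_zero.2 h.le
      have h2 := Polynomial.le_natDegree_of_ne_zero hc
      omega
    obtain ⟨α, hα⟩ := IsAlgClosed.exists_root g0 hdeg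
    refine ⟨α, hα, fun h => hP ?_⟩
    obtain ⟨A, B, -, -, hAB⟩ := Polynomial.exists_mul_add_mul_eq_C_resultant (m := d) (n := d - 1) g0 g0.derivative hg0
      (by omega) (Or.inl (by omega))
    have := congrArg (Polynomial.eval α) hAB
    rw [Polynomial.eval_C, Polynomial.eval_add, Polynomial.eval_mul, Polynomial.eval_mul, h, hα] at this
    rw [← this]; simp
end CM

open MvPolynomial

namespace CM

/-- the triangular index set of monomials of degree less than `d` -/
abbrev Tri (d : ℕ) : Type := (i : Fin d) × Fin (i.1 + 1)

theorem card_tri (d : ℕ) : Fintype.card (Tri d) * 2 = d * (d + 1) := by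
  rw [Fintype.card_sigma]
  simp only [Fintype.card_fin]
  rw [Fin.sum_univ_eq_sum_range (fun i => i + 1) d]
  have := Finset.sum_range_id_mul_two (d + 1)
  rw [Finset.sum_range_succ'] at this
  simp only [add_zero, Nat.add_sub_cancel] at this
  rw [this]; ring

/-- the exponent attached to an index -/
noncomputable def triExp {d : ℕ} (x : Tri d) : Fin 2 →₀ ℕ :=
  Finsupp.single 0 x.2.1 + Finsupp.single 1 (x.1.1 - x.2.1)

theorem triExp_zero {d : ℕ} (x : Tri d) : triExp x 0 = x.2.1 := by simp [triExp]
theorem triExp_one {d : ℕ} (x : Tri d) : triExp x 1 = x.1.1 - x.2.1 := by simp [triExp]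

theorem tri_ext {d : ℕ} (x y : Tri d) (h0 : x.2.1 = y.2.1) (h1 : x.1.1 - x.2.1 = y.1.1 - y.2.1) : x = y := by
  obtain ⟨⟨i, hi⟩, ⟨j, hj⟩⟩ := x
  obtain ⟨⟨i', hi'⟩, ⟨j', hj'⟩⟩ := y
  simp only at h0 h1 hj hj'
  subst h0
  have : i = i' := by omega
  subst this
  rfl

theorem triExp_injective {d : ℕ} : Function.Injective (triExp (d := d)) := by
  intro x y h
  refine tri_ext x y ?_ ?_
  · rw [← triExp_zero, ← triExp_zero, h]
  · rw [← triExp_one, ← triExp_one, h]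

theorem exists_tri {d : ℕ} (s : Fin 2 →₀ ℕ) (hs : s.degree < d) : ∃ x : Tri d, triExp x = s := by
  have h2 : s.degree = s 0 + s 1 := by
    rw [Finsupp.degree_eq_sum, Fin.sum_univ_two]
  refine ⟨⟨⟨s 0 + s 1, by omega⟩, ⟨s 0, by simp⟩⟩, ?_⟩
  ext i
  fin_cases i
  · exact triExp_zero _
  · refine (triExp_one _).trans ?_
    simp

theorem tri_expand {R : Type*} [CommRing R] {d : ℕ} (hd : 1 ≤ d) (A : MvPolynomial (Fin 2) R)
    (hA : A.totalDegree ≤ d - 1) : A = ∑ x : Tri d, monomial (triExp x) (coeff (triExp x) A) := by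
  classical
  ext s
  rw [coeff_sum]
  simp only [coeff_monomial]
  by_cases hs : s.degree < d
  · obtain ⟨x, rfl⟩ := exists_tri s hs
    rw [Finset.sum_eq_single x]
    · simp
    · intro b _ hb
      rw [if_neg fun h => hb (triExp_injective h)]
    · simp
  · have h0 : coeff s A = 0 := by
      by_contra h
      have : s.degree ≤ A.totalDegree := le_totalDegree (mem_support_iff.2 h)
      omega
    rw [h0, Finset.sum_eq_zero]
    intro x _
    split_ifs with h
    · rw [h, h0]
    · rfl

theorem tri_aeval {R : Type*} [CommRing R] {d : ℕ} (hd : 1 ≤ d) (A : MvPolynomial (Fin 2) R)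
    (hA : A.totalDegree ≤ d - 1) (p : Polynomial R) :
    (aeval ![p, Polynomial.X] A : Polynomial R) =
      ∑ x : Tri d, Polynomial.C (coeff (triExp x) A) * (Polynomial.X ^ (x.1.1 - x.2.1) * p ^ x.2.1) := by
  conv_lhs => rw [tri_expand hd A hA]
  rw [map_sum]
  refine Finset.sum_congr rfl fun x _ => ?_
  rw [aeval_monomial, Finsupp.prod_fintype _ _ (by simp), Fin.prod_univ_two, triExp_zero, triExp_one]
  simp
  ring

/-- the bivariate polynomial with coefficient vector `c` -/
theorem tri_kernel {R : Type*} [CommRing R] [IsDomain R] [UniqueFactorizationMonoid R]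
    (G : Polynomial (Polynomial R)) (d : ℕ) (hd : 2 ≤ d) (hG : Irreducible G) (hGd : G.natDegree = d)
    (hGc : ∀ k, (G.coeff k).natDegree ≤ d) (p : Polynomial R)
    (h1 : Polynomial.X ^ (2 * (d * (d - 1)) + 1) ∣ G.eval p) (c : Tri d → R)
    (h2 : Polynomial.X ^ (2 * (d * (d - 1)) + 1) ∣
      ∑ x : Tri d, Polynomial.C (c x) * (Polynomial.X ^ (x.1.1 - x.2.1) * p ^ x.2.1)) : c = 0 := by
  classical
  let h : Polynomial (Polynomial R) :=
    ∑ x : Tri d, Polynomial.C (Polynomial.C (c x) * Polynomial.X ^ (x.1.1 - x.2.1)) * Polynomial.X ^ x.2.1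
  have hh : h = 0 := by
    refine kernel_zero G h d hd hG hGd hGc ?_ ?_ p h1 ?_
    · refine Polynomial.natDegree_sum_le_of_forall_le _ _ fun x _ => ?_
      refine (Polynomial.natDegree_C_mul_X_pow_le _ _).trans ?_
      have := x.1.2; have := x.2.2; omega
    · intro k
      rw [Polynomial.finsetSum_coeff]
      refine Polynomial.natDegree_sum_le_of_forall_le _ _ fun x _ => ?_
      rw [Polynomial.coeff_C_mul_X_pow]
      split_ifs
      · refine (Polynomial.natDegree_C_mul_X_pow_le _ _).trans ?_
        have := x.1.2; have := x.2.2; omega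
      · simp
    · have : h.eval p = ∑ x : Tri d, Polynomial.C (c x) * (Polynomial.X ^ (x.1.1 - x.2.1) * p ^ x.2.1) := by
        rw [Polynomial.eval_finsetSum]
        refine Finset.sum_congr rfl fun x _ => ?_
        simp
        ring
      rw [this]; exact h2
  funext y
  have := congrArg (fun z : Polynomial (Polynomial R) => (z.coeff y.2.1).coeff (y.1.1 - y.2.1)) hh
  simp only [h, Polynomial.finsetSum_coeff, Polynomial.coeff_zero] at this
  rw [Finset.sum_eq_single y] at this
  · rw [Polynomial.coeff_C_mul_X_pow, if_pos rfl, Polynomial.coeff_C_mul_X_pow, if_pos rfl] at this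
    exact this
  · intro x _ hx
    rw [Polynomial.coeff_C_mul_X_pow]
    split_ifs with h0
    · rw [Polynomial.coeff_C_mul_X_pow]
      split_ifs with h3
      · exact absurd (tri_ext x y h0.symm h3.symm) hx
      · rfl
    · simp
  · simp

/-- polynomials whose `k`th coefficient has total degree at most `k` -/
def degSub (K : Type*) [Field K] (n : ℕ) : Subring (Polynomial (MvPolynomial (Fin n) K)) where
  carrier := {s | ∀ k, (s.coeff k).totalDegree ≤ k}
  mul_mem' := by
    intro a b ha hb k
    rw [Polynomial.coeff_mul]
    refine totalDegree_finsetSum_le fun z hz => ?_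
    refine (totalDegree_mul _ _).trans ?_
    have := ha z.1; have := hb z.2
    have := Finset.HasAntidiagonal.mem_antidiagonal.1 hz
    omega
  one_mem' := by
    intro k
    rw [Polynomial.coeff_one]
    split_ifs <;> simp
  add_mem' := by
    intro a b ha hb k
    rw [Polynomial.coeff_add]
    exact (totalDegree_add _ _).trans (max_le (ha k) (hb k))
  zero_mem' := by intro k; simp
  neg_mem' := by
    intro a ha k
    rw [Polynomial.coeff_neg, totalDegree_neg]; exact ha k

theorem exists_Q_aux {K : Type*} [Field K] {n d N : ℕ} (p : Polynomial (MvPolynomial (Fin n) K))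
    (hp : p ∈ degSub K n)
    (hker : ∀ c : Tri d → MvPolynomial (Fin n) K, Polynomial.X ^ (N + 1) ∣
      ∑ x : Tri d, Polynomial.C (c x) * (Polynomial.X ^ (x.1.1 - x.2.1) * p ^ x.2.1) → c = 0) :
    ∃ Q : MvPolynomial (Fin n) K, Q ≠ 0 ∧ Q.totalDegree ≤ Fintype.card (Tri d) * N ∧
      ∀ η, eval η Q ≠ 0 → ∀ c : Tri d → K, Polynomial.X ^ (N + 1) ∣
        ∑ x : Tri d, Polynomial.C (c x) * (Polynomial.X ^ (x.1.1 - x.2.1) * (p.map (eval η)) ^ x.2.1) → c = 0 := by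
  classical
  let M : Matrix (Fin (N + 1)) (Tri d) (MvPolynomial (Fin n) K) :=
    fun k x => (Polynomial.X ^ (x.1.1 - x.2.1) * p ^ x.2.1).coeff k.1
  have hX : (Polynomial.X : Polynomial (MvPolynomial (Fin n) K)) ∈ degSub K n := by
    intro k
    rw [Polynomial.coeff_X]
    split_ifs <;> simp
  obtain ⟨r, hr⟩ := exists_minor M (by
    intro c hc
    apply hker
    rw [Polynomial.X_pow_dvd_iff]
    intro k hk
    have := congrFun hc ⟨k, hk⟩
    simp only [Matrix.mulVec, dotProduct, M, Pi.zero_apply] at this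
    rw [Polynomial.finsetSum_coeff, ← this]
    refine Finset.sum_congr rfl fun x _ => ?_
    rw [Polynomial.coeff_C_mul, mul_comm])
  refine ⟨_, hr, ?_, ?_⟩
  · have := det_fil (fun a (x : MvPolynomial (Fin n) K) => x.totalDegree ≤ a)
      (fun a x y h1 h2 => (totalDegree_add _ _).trans (max_le h1 h2))
      (fun a x h => by rwa [totalDegree_neg])
      (fun a b x y h1 h2 => (totalDegree_mul _ _).trans (add_le_add h1 h2))
      (by simp) (by simp) (M.submatrix r id) (fun _ => N) (by
        intro i j
        have h1 := (degSub K n).mul_mem ((degSub K n).pow_mem hX (j.1.1 - j.2.1)) ((degSub K n).pow_mem hp j.2.1) (r i).1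
        have := (r i).2
        exact h1.trans (by omega))
    simpa using this
  · intro η hη c hc
    rw [RingHom.map_det] at hη
    refine Matrix.eq_zero_of_mulVec_eq_zero hη ?_
    funext i
    rw [Polynomial.X_pow_dvd_iff] at hc
    have := hc (r i).1 (r i).2
    rw [Polynomial.finsetSum_coeff] at this
    rw [Pi.zero_apply, ← this]
    simp only [Matrix.mulVec, dotProduct]
    refine Finset.sum_congr rfl fun x _ => ?_
    rw [Polynomial.coeff_C_mul, mul_comm]
    congr 1
    have : (Polynomial.X ^ (x.1.1 - x.2.1) * (p.map (eval η)) ^ x.2.1) =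
      (Polynomial.X ^ (x.1.1 - x.2.1) * p ^ x.2.1).map (eval η) := by simp
    rw [this, Polynomial.coeff_map]
    rfl

theorem totalDegree_pos_of_not_isUnit {K σ : Type*} [Field K] {A : MvPolynomial σ K} (h0 : A ≠ 0)
    (h : ¬ IsUnit A) : 1 ≤ A.totalDegree := by
  by_contra hlt
  have : A.totalDegree = 0 := by omega
  rw [totalDegree_eq_zero_iff_eq_C] at this
  apply h
  rw [this]
  refine (IsUnit.mk0 _ ?_).map C
  intro h1
  rw [h1, map_zero] at this
  exact h0 this

theorem slice_irred {K : Type*} [Field K] (g : MvPolynomial (Fin 2) K) (d N : ℕ)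
    (hd : g.totalDegree ≤ d) (α : K) (p : Polynomial K) (hp : p.coeff 0 = α)
    (hN : Polynomial.X ^ (N + 1) ∣ (aeval ![p, Polynomial.X] g : Polynomial K))
    (h1 : (Polynomial.derivative (aeval ![Polynomial.X, 0] g : Polynomial K)).eval α ≠ 0)
    (hker : ∀ A : MvPolynomial (Fin 2) K, A.totalDegree ≤ d - 1 →
      Polynomial.X ^ (N + 1) ∣ (aeval ![p, Polynomial.X] A : Polynomial K) → A = 0) :
    Irreducible g := by
  have hg0 : g ≠ 0 := by rintro rfl; simp at h1
  have hspec : ∀ A : MvPolynomial (Fin 2) K,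
      (aeval ![p, Polynomial.X] A : Polynomial K).coeff 0 = (aeval ![Polynomial.X, 0] A : Polynomial K).eval α := by
    intro A
    rw [Polynomial.coeff_zero_eq_eval_zero, ← Polynomial.coe_aeval_eq_eval, ← Polynomial.coe_aeval_eq_eval,
      MvPolynomial.comp_aeval_apply, MvPolynomial.comp_aeval_apply]
    congr 2
    funext i
    fin_cases i
    · simp [← hp, Polynomial.coeff_zero_eq_eval_zero]
    · simp
  constructor
  · intro hu
    rw [MvPolynomial.isUnit_iff_totalDegree_of_isReduced] at hu
    have := hu.2
    rw [totalDegree_eq_zero_iff_eq_C] at this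
    rw [this] at h1
    simp at h1
  · intro A B hAB
    by_contra! hcon
    obtain ⟨hA, hB⟩ := hcon
    have hA0 : A ≠ 0 := by rintro rfl; simp at hAB; exact hg0 hAB
    have hB0 : B ≠ 0 := by rintro rfl; simp at hAB; exact hg0 hAB
    have hA1 := totalDegree_pos_of_not_isUnit hA0 hA
    have hB1 := totalDegree_pos_of_not_isUnit hB0 hB
    have hdeg : A.totalDegree + B.totalDegree ≤ d := by
      rw [← totalDegree_mul_of_isDomain hA0 hB0, ← hAB]; exact hd
    rw [hAB, map_mul] at hN
    by_cases hAα : (aeval ![p, Polynomial.X] A : Polynomial K).coeff 0 = 0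
    · by_cases hBα : (aeval ![p, Polynomial.X] B : Polynomial K).coeff 0 = 0
      · rw [hspec] at hAα hBα
        apply h1
        rw [hAB, map_mul, Polynomial.derivative_mul, Polynomial.eval_add, Polynomial.eval_mul, Polynomial.eval_mul,
          hAα, hBα]
        simp
      · rw [← Polynomial.X_dvd_iff] at hBα
        exact hA0 (hker A (by omega) (Polynomial.prime_X.pow_dvd_of_dvd_mul_right _ hBα hN))
    · rw [← Polynomial.X_dvd_iff] at hAα
      exact hB0 (hker B (by omega) (Polynomial.prime_X.pow_dvd_of_dvd_mul_left _ hAα hN))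

end CM

open MvPolynomial

namespace CM

/-- the plane slice -/
noncomputable def slice {K : Type*} [CommRing K] {n : ℕ} (f : MvPolynomial (Fin (n + 1)) K)
    (ν : Fin (n + 1) → K) (ω η : Fin n → K) : MvPolynomial (Fin 2) K :=
  MvPolynomial.aeval (fun i : Fin (n + 1) => Fin.cases (C (ν 0) + X 0)
    (fun j : Fin n => C (ν j.succ) + C (ω j) * X 0 + C (η j) * X 1) i) f

theorem slice_totalDegree {K : Type*} [Field K] {n : ℕ} (f : MvPolynomial (Fin (n + 1)) K)
    (ν : Fin (n + 1) → K) (ω η : Fin n → K) : (slice f ν ω η).totalDegree ≤ f.totalDegree := by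
  have hX : ∀ (a : K) (i : Fin 2), (C a * X i : MvPolynomial (Fin 2) K).totalDegree ≤ 1 := by
    intro a i
    refine (totalDegree_mul _ _).trans ?_
    simp
  refine aeval_fil (fun a (x : MvPolynomial (Fin 2) K) => x.totalDegree ≤ a) ?_ ?_ ?_ ?_ _ ?_ f
  · intro a b x h1 h2; exact h2.trans h1
  · intro a x y h1 h2; exact (totalDegree_add _ _).trans (max_le h1 h2)
  · intro a b x y h1 h2; exact (totalDegree_mul _ _).trans (add_le_add h1 h2)
  · intro c; simp [MvPolynomial.algebraMap_eq]
  · intro i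
    refine Fin.cases ?_ (fun j => ?_) i
    · exact (totalDegree_add _ _).trans (max_le (by simp) (by simp))
    · exact (totalDegree_add _ _).trans (max_le ((totalDegree_add _ _).trans (max_le (by simp) (hX _ _))) (hX _ _))

section
variable {K : Type*} [Field K] {n : ℕ}

/-- base point of the generic line, as a polynomial in `Y` -/
noncomputable def nut (ν : Fin (n + 1) → K) : Fin (n + 1) → Polynomial (MvPolynomial (Fin n) K) :=
  Fin.cons (Polynomial.C (C (ν 0))) (fun j => Polynomial.C (C (ν j.succ)) + Polynomial.C (X j) * Polynomial.X)

/-- constant direction -/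
noncomputable def vt (ω : Fin n → K) : Fin (n + 1) → Polynomial (MvPolynomial (Fin n) K) :=
  fun i => Polynomial.C (C ((Fin.cons 1 ω : Fin (n + 1) → K) i))

/-- generic slice -/
noncomputable def Ft (f : MvPolynomial (Fin (n + 1)) K) (ν : Fin (n + 1) → K) (ω : Fin n → K) :
    Polynomial (Polynomial (MvPolynomial (Fin n) K)) := lin f (nut ν) (vt ω)

theorem Ft_coeff (f : MvPolynomial (Fin (n + 1)) K) (ν : Fin (n + 1) → K) (ω : Fin n → K) (d : ℕ)
    (hd : f.totalDegree = d) :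
    (Ft f ν ω).coeff d = Polynomial.C (C ((lin f ν (Fin.cons 1 ω : Fin (n + 1) → K)).coeff d)) := by
  rw [Ft, lin_coeff f _ _ d hd, lin_coeff f _ _ d hd]
  exact MvPolynomial.aeval_algebraMap_apply (Polynomial (MvPolynomial (Fin n) K))
    (Fin.cons 1 ω : Fin (n + 1) → K) (homogeneousComponent d f)

theorem Ft_map_zero (f : MvPolynomial (Fin (n + 1)) K) (ν : Fin (n + 1) → K) (ω : Fin n → K) :
    (Ft f ν ω).map (Polynomial.evalRingHom 0) = (lin f ν (Fin.cons 1 ω : Fin (n + 1) → K)).map C := by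
  have h1 := lin_map f (nut ν) (vt ω) ((Polynomial.aeval (0 : MvPolynomial (Fin n) K)).restrictScalars K)
  have h2 := lin_map f ν (Fin.cons 1 ω : Fin (n + 1) → K) (Algebra.ofId K (MvPolynomial (Fin n) K))
  refine Eq.trans ?_ ((h1.trans ?_).trans (h2.symm.trans ?_))
  · congr 1
  · congr 1
    · funext i
      refine Fin.cases ?_ (fun j => ?_) i <;> simp [nut, Algebra.ofId_apply, MvPolynomial.algebraMap_eq]
    · funext i
      simp [vt, Algebra.ofId_apply, MvPolynomial.algebraMap_eq]
  · congr 1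

theorem Ft_map_one (f : MvPolynomial (Fin (n + 1)) K) (ν : Fin (n + 1) → K) (ω : Fin n → K) :
    (Ft f ν ω).map (Polynomial.evalRingHom 1) =
      lin f (Fin.cons (C (ν 0)) (fun j => C (ν j.succ) + X j) : Fin (n + 1) → MvPolynomial (Fin n) K)
      (fun i => C ((Fin.cons 1 ω : Fin (n + 1) → K) i)) := by
  have h1 := lin_map f (nut ν) (vt ω) ((Polynomial.aeval (1 : MvPolynomial (Fin n) K)).restrictScalars K)
  refine Eq.trans ?_ (h1.trans ?_)
  · congr 1
  · congr 1
    · funext i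
      refine Fin.cases ?_ (fun j => ?_) i <;> simp [nut]
    · funext i
      simp [vt]

theorem Ft_natDegree (f : MvPolynomial (Fin (n + 1)) K) (ν : Fin (n + 1) → K) (ω : Fin n → K) (d : ℕ)
    (hd : f.totalDegree = d) (hc : (lin f ν (Fin.cons 1 ω : Fin (n + 1) → K)).coeff d ≠ 0) :
    (Ft f ν ω).natDegree = d := by
  apply le_antisymm
  · rw [← hd]; exact lin_natDegree _ _ _
  · apply Polynomial.le_natDegree_of_ne_zero
    rw [Ft_coeff f ν ω d hd]
    simpa using hc

theorem Ft_irreducible {f : MvPolynomial (Fin (n + 1)) K} (hf : Irreducible f)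
    (ν : Fin (n + 1) → K) (ω : Fin n → K) (d : ℕ)
    (hd : f.totalDegree = d) (hc : (lin f ν (Fin.cons 1 ω : Fin (n + 1) → K)).coeff d ≠ 0) :
    Irreducible (Ft f ν ω) := by
  set c := (lin f ν (Fin.cons 1 ω : Fin (n + 1) → K)).coeff d with hcdef
  let u : Polynomial (Polynomial (MvPolynomial (Fin n) K)) := Polynomial.C (Polynomial.C (C c⁻¹))
  have hu : IsUnit u := (((IsUnit.mk0 c⁻¹ (inv_ne_zero hc)).map C).map Polynomial.C).map Polynomial.C
  have hmonic : (u * Ft f ν ω).Monic := by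
    refine Polynomial.monic_of_natDegree_le_of_coeff_eq_one d ?_ ?_
    · refine (Polynomial.natDegree_C_mul_le _ _).trans ?_
      rw [Ft_natDegree f ν ω d hd hc]
    · rw [Polynomial.coeff_C_mul, Ft_coeff f ν ω d hd, ← map_mul, ← map_mul, inv_mul_cancel₀ hc]
      simp
  have := hmonic.irreducible_of_irreducible_map (Polynomial.evalRingHom 1) (u * Ft f ν ω) (by
    rw [Polynomial.map_mul, Ft_map_one]
    exact (irreducible_isUnit_mul (hu.map (Polynomial.mapRingHom (Polynomial.evalRingHom 1)))).2
      (lin_shear_irreducible ν ω hf))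
  exact (irreducible_isUnit_mul hu).1 this

theorem Ft_coeff_natDegree (f : MvPolynomial (Fin (n + 1)) K) (ν : Fin (n + 1) → K) (ω : Fin n → K) (k : ℕ) :
    ((Ft f ν ω).coeff k).natDegree ≤ f.totalDegree := by
  refine lin_coeff_fil (fun a (x : Polynomial (MvPolynomial (Fin n) K)) => x.natDegree ≤ a) ?_ ?_ ?_ ?_ ?_ f _ _ ?_ ?_ k
  · intro a b x h1 h2; exact h2.trans h1
  · intro a x y h1 h2; exact Polynomial.natDegree_add_le_of_degree_le h1 h2
  · intro a b x y h1 h2; exact Polynomial.natDegree_mul_le_of_le h1 h2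
  · intro a; simp
  · intro c; simp [Polynomial.algebraMap_apply]
  · intro i
    refine Fin.cases ?_ (fun j => ?_) i
    · simp [nut]
    · simp only [nut, Fin.cons_succ]
      exact natDegree_lin_factor _ _
  · intro i; simp [vt]

theorem C_mem_degSub (a : K) : Polynomial.C (C a) ∈ degSub K n := by
  intro k
  rw [Polynomial.coeff_C]
  split_ifs <;> simp

theorem Ft_eval_mem (f : MvPolynomial (Fin (n + 1)) K) (ν : Fin (n + 1) → K) (ω : Fin n → K)
    (s : Polynomial (MvPolynomial (Fin n) K)) (hs : s ∈ degSub K n) : (Ft f ν ω).eval s ∈ degSub K n := by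
  rw [Ft, lin_eval]
  refine aeval_fil (fun _ x => x ∈ degSub K n) ?_ ?_ ?_ ?_ _ ?_ f
  · intro _ _ _ _ h; exact h
  · intro _ x y h1 h2; exact (degSub K n).add_mem h1 h2
  · intro _ _ x y h1 h2; exact (degSub K n).mul_mem h1 h2
  · intro c; exact C_mem_degSub c
  · intro i
    refine (degSub K n).add_mem ?_ ((degSub K n).mul_mem (C_mem_degSub _) hs)
    refine Fin.cases ?_ (fun j => ?_) i
    · exact C_mem_degSub _
    · refine (degSub K n).add_mem (C_mem_degSub _) ?_
      intro k
      rw [Polynomial.coeff_C_mul, Polynomial.coeff_X]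
      split_ifs with h
      · subst h; simp
      · simp

theorem Ft_hensel (f : MvPolynomial (Fin (n + 1)) K) (ν : Fin (n + 1) → K) (ω : Fin n → K) (α : K)
    (h0 : (lin f ν (Fin.cons 1 ω : Fin (n + 1) → K)).eval α = 0)
    (h1 : (lin f ν (Fin.cons 1 ω : Fin (n + 1) → K)).derivative.eval α ≠ 0) (N : ℕ) :
    ∃ p ∈ degSub K n, p.coeff 0 = C α ∧ Polynomial.X ^ (N + 1) ∣ (Ft f ν ω).eval p := by
  have key : ∀ G : Polynomial (Polynomial (MvPolynomial (Fin n) K)),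
      (G.eval (Polynomial.C (C α))).coeff 0 = (G.map (Polynomial.evalRingHom 0)).eval (C α) := by
    intro G
    rw [Polynomial.coeff_zero_eq_eval_zero, Polynomial.eval_map,
      ← Polynomial.coe_evalRingHom]
    have h := Polynomial.eval₂_at_apply (p := G) (Polynomial.evalRingHom 0) (Polynomial.C (C α))
    simpa using h.symm
  refine hensel (degSub K n) (Ft f ν ω) (Ft_eval_mem f ν ω) (C α)
    (C ((lin f ν (Fin.cons 1 ω : Fin (n + 1) → K)).derivative.eval α)⁻¹) (C_mem_degSub α) ?_ ?_ ?_ N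
  · rw [key, Ft_map_zero, Polynomial.eval_map, Polynomial.eval₂_at_apply, h0, map_zero]
  · rw [key, ← Polynomial.derivative_map, Ft_map_zero, Polynomial.derivative_map, Polynomial.eval_map,
      Polynomial.eval₂_at_apply, ← map_mul, mul_inv_cancel₀ h1, map_one]
  · intro s hs k l
    rw [Polynomial.coeff_C_mul_X_pow]
    split_ifs with h
    · subst h
      refine (totalDegree_mul _ _).trans ?_
      rw [totalDegree_C, zero_add]; exact hs l
    · simp

theorem slice_eval (f : MvPolynomial (Fin (n + 1)) K) (ν : Fin (n + 1) → K) (ω η : Fin n → K)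
    (p : Polynomial (MvPolynomial (Fin n) K)) :
    (aeval ![p.map (eval η), Polynomial.X] (slice f ν ω η) : Polynomial K) =
      ((Ft f ν ω).eval p).map (eval η) := by
  rw [Ft, lin_eval, slice]
  have : ∀ x : Polynomial (MvPolynomial (Fin n) K), x.map (eval η) =
      (Polynomial.mapAlgHom (MvPolynomial.aeval η : MvPolynomial (Fin n) K →ₐ[K] K)) x := by
    intro x; rfl
  rw [this (MvPolynomial.aeval _ f), MvPolynomial.comp_aeval_apply, MvPolynomial.comp_aeval_apply]
  congr 2
  funext i
  refine Fin.cases ?_ (fun j => ?_) i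
  · simp [nut, vt]
  · simp [nut, vt]
    ring

theorem slice_zero (f : MvPolynomial (Fin (n + 1)) K) (ν : Fin (n + 1) → K) (ω η : Fin n → K) :
    (aeval ![Polynomial.X, 0] (slice f ν ω η) : Polynomial K) = lin f ν (Fin.cons 1 ω : Fin (n + 1) → K) := by
  rw [lin, slice, MvPolynomial.comp_aeval_apply]
  congr 2
  funext i
  refine Fin.cases ?_ (fun j => ?_) i
  · simp
  · simp

theorem exists_Q {f : MvPolynomial (Fin (n + 1)) K} (hf : Irreducible f)
    (d : ℕ) (hd : f.totalDegree = d) (hd2 : 2 ≤ d) (ν : Fin (n + 1) → K) (ω : Fin n → K)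
    (hc : (lin f ν (Fin.cons 1 ω : Fin (n + 1) → K)).coeff d ≠ 0) (α : K)
    (h0 : (lin f ν (Fin.cons 1 ω : Fin (n + 1) → K)).eval α = 0)
    (h1 : (lin f ν (Fin.cons 1 ω : Fin (n + 1) → K)).derivative.eval α ≠ 0) :
    ∃ Q : MvPolynomial (Fin n) K, Q ≠ 0 ∧ Q.totalDegree ≤ Fintype.card (Tri d) * (2 * (d * (d - 1))) ∧
      ∀ η, eval η Q ≠ 0 → Irreducible (slice f ν ω η) := by
  obtain ⟨p, hp, hpα, hpN⟩ := Ft_hensel f ν ω α h0 h1 (2 * (d * (d - 1)))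
  obtain ⟨Q, hQ0, hQd, hQ⟩ := exists_Q_aux (d := d) p hp
    (tri_kernel (Ft f ν ω) d hd2 (Ft_irreducible hf ν ω d hd hc) (Ft_natDegree f ν ω d hd hc)
      (fun k => (Ft_coeff_natDegree f ν ω k).trans hd.le) p hpN)
  refine ⟨Q, hQ0, hQd, fun η hη => ?_⟩
  refine slice_irred (slice f ν ω η) d (2 * (d * (d - 1))) ((slice_totalDegree f ν ω η).trans hd.le) α
    (p.map (eval η)) ?_ ?_ ?_ ?_
  · rw [Polynomial.coeff_map, hpα, eval_C]
  · rw [slice_eval]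
    have := (Polynomial.mapRingHom (eval η)).map_dvd hpN
    simpa using this
  · rw [slice_zero]; exact h1
  · intro A hA hdvd
    rw [tri_aeval (by omega) A hA] at hdvd
    have := hQ η hη _ hdvd
    rw [tri_expand (by omega) A hA]
    refine Finset.sum_eq_zero fun x _ => ?_
    have h2 := congrFun this x
    simp only [Pi.zero_apply] at h2
    rw [h2, map_zero]

end
end CM

open MvPolynomial

namespace CM

theorem slice_map {F K : Type*} [Field F] [Field K] (φ : F →+* K) {n : ℕ}
    (f : MvPolynomial (Fin (n + 1)) F) (ν : Fin (n + 1) → F) (ω η : Fin n → F) :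
    MvPolynomial.map φ (slice f ν ω η) =
      slice (MvPolynomial.map φ f) (fun i => φ (ν i)) (fun i => φ (ω i)) (fun i => φ (η i)) := by
  unfold slice
  induction f using MvPolynomial.induction_on with
  | C a => simp [MvPolynomial.algebraMap_eq]
  | add p q hp hq => simp only [map_add, hp, hq]
  | mul_X p j hp =>
    simp only [map_mul, hp, aeval_X, map_X]
    congr 1
    refine Fin.cases ?_ (fun j => ?_) j <;> simp

theorem count {F K : Type*} [Field F] [Fintype F] [Field K] (φ : F →+* K) (n a b : ℕ)
    (bad : (Fin (n + 1) → F) × (Fin n → F) × (Fin n → F) → Prop)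
    (P : MvPolynomial (Fin (n + 1) ⊕ Fin n) K) (hP : P ≠ 0) (hPa : P.totalDegree ≤ a)
    (hQ : ∀ (ν : Fin (n + 1) → F) (ω : Fin n → F),
      eval (Sum.elim (fun i => φ (ν i)) (fun i => φ (ω i))) P ≠ 0 →
      ∃ Q : MvPolynomial (Fin n) K, Q ≠ 0 ∧ Q.totalDegree ≤ b ∧
        ∀ η : Fin n → F, eval (fun i => φ (η i)) Q ≠ 0 → ¬ bad (ν, ω, η)) :
    Nat.card {ξ // bad ξ} ≤ (a + b) * Fintype.card F ^ (3 * n) := by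
  classical
  set q := Fintype.card F with hq
  have hq0 : 0 < q := Fintype.card_pos
  have h1 : Nat.card {ξ // bad ξ} = ∑ ν : Fin (n + 1) → F, ∑ ω : Fin n → F,
      Nat.card {η : Fin n → F // bad (ν, ω, η)} := by
    simp only [Nat.card_eq_fintype_card, Fintype.card_subtype, Finset.card_filter]
    rw [Fintype.sum_prod_type]
    refine Finset.sum_congr rfl fun ν _ => ?_
    rw [Fintype.sum_prod_type]
  have h2 : Nat.card {x : Fin (n + 1) ⊕ Fin n → F // eval (fun i => φ (x i)) P = 0} =
      ∑ ν : Fin (n + 1) → F, ∑ ω : Fin n → F,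
        if eval (Sum.elim (fun i => φ (ν i)) (fun i => φ (ω i))) P = 0 then 1 else 0 := by
    simp only [Nat.card_eq_fintype_card, Fintype.card_subtype, Finset.card_filter]
    rw [← Fintype.sum_prod_type (fun z : (Fin (n + 1) → F) × (Fin n → F) =>
      if eval (Sum.elim (fun i => φ (z.1 i)) (fun i => φ (z.2 i))) P = 0 then 1 else 0)]
    refine Fintype.sum_equiv (Equiv.sumArrowEquivProdArrow _ _ _) _ _ fun x => ?_
    have : (fun i => φ (x i)) = Sum.elim (fun i => φ (((Equiv.sumArrowEquivProdArrow _ _ _) x).1 i))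
        (fun i => φ (((Equiv.sumArrowEquivProdArrow _ _ _) x).2 i)) := by
      funext i
      cases i <;> rfl
    rw [this]
  have h3 := zippel φ P hP
  rw [h2, Fintype.card_sum, Fintype.card_fin, Fintype.card_fin] at h3
  have h4 : ∀ (ν : Fin (n + 1) → F) (ω : Fin n → F), Nat.card {η : Fin n → F // bad (ν, ω, η)} * q ≤
      (if eval (Sum.elim (fun i => φ (ν i)) (fun i => φ (ω i))) P = 0 then 1 else 0) * q * q ^ n + b * q ^ n := by
    intro ν ω
    split_ifs with h
    · have : Nat.card {η : Fin n → F // bad (ν, ω, η)} ≤ q ^ n := by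
        rw [Nat.card_eq_fintype_card]
        refine (Fintype.card_subtype_le _).trans ?_
        simp [hq]
      nlinarith
    · obtain ⟨Q, hQ0, hQb, hQ'⟩ := hQ ν ω h
      have h5 := zippel φ Q hQ0
      rw [Fintype.card_fin] at h5
      have h6 : Nat.card {η : Fin n → F // bad (ν, ω, η)} ≤
          Nat.card {x : Fin n → F // eval (fun i => φ (x i)) Q = 0} := by
        simp only [Nat.card_eq_fintype_card]
        refine Fintype.card_subtype_mono _ _ fun η hη => ?_
        by_contra h7
        exact hQ' η h7 hη
      calc _ ≤ Nat.card {x : Fin n → F // eval (fun i => φ (x i)) Q = 0} * q := Nat.mul_le_mul_right _ h6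
        _ ≤ Q.totalDegree * q ^ n := h5
        _ ≤ b * q ^ n := Nat.mul_le_mul_right _ hQb
        _ ≤ _ := by omega
  refine Nat.le_of_mul_le_mul_right ?_ hq0
  rw [h1, Finset.sum_mul]
  calc _ ≤ ∑ ν : Fin (n + 1) → F, ∑ ω : Fin n → F,
      ((if eval (Sum.elim (fun i => φ (ν i)) (fun i => φ (ω i))) P = 0 then 1 else 0) * q * q ^ n + b * q ^ n) := by
        refine Finset.sum_le_sum fun ν _ => ?_
        rw [Finset.sum_mul]
        exact Finset.sum_le_sum fun ω _ => h4 ν ω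
    _ = (∑ ν : Fin (n + 1) → F, ∑ ω : Fin n → F,
        if eval (Sum.elim (fun i => φ (ν i)) (fun i => φ (ω i))) P = 0 then 1 else 0) * q * q ^ n
        + q ^ (n + 1) * (q ^ n * (b * q ^ n)) := by
        simp only [Finset.sum_add_distrib, Finset.sum_mul]
        simp [hq]
    _ ≤ P.totalDegree * q ^ (n + 1 + n) * q ^ n + q ^ (n + 1) * (q ^ n * (b * q ^ n)) := by gcongr
    _ ≤ a * q ^ (n + 1 + n) * q ^ n + q ^ (n + 1) * (q ^ n * (b * q ^ n)) := by gcongr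
    _ = _ := by ring

end CM

theorem cafure_matera_slices {F : Type*} [Field F] [Fintype F] (n : ℕ)
    (f : MvPolynomial (Fin (n + 1)) F)
    (habs : Irreducible (MvPolynomial.map (algebraMap F (AlgebraicClosure F)) f))
    (d : ℕ) (hd : f.totalDegree = d) (hd2 : 2 ≤ d) :
    (Nat.card {ξ : (Fin (n + 1) → F) × (Fin n → F) × (Fin n → F) //
        ¬ Irreducible (MvPolynomial.map (algebraMap F (AlgebraicClosure F))
          (MvPolynomial.aeval
            (fun i : Fin (n + 1) => Fin.cases (C (ξ.1 0) + X 0)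
              (fun j : Fin n =>
                C (ξ.1 j.succ) + C (ξ.2.1 j) * X 0 + C (ξ.2.2 j) * X 1) i)
            f : MvPolynomial (Fin 2) F))} : ℝ)
      ≤ (3 * (d : ℝ) ^ 4 - 4 * (d : ℝ) ^ 3 + 5 * (d : ℝ) ^ 2) / 2
          * (Fintype.card F : ℝ) ^ (3 * n) := by
  set φ := algebraMap F (AlgebraicClosure F) with hφ
  obtain ⟨p, hp⟩ := CharP.exists F
  have hpp : Fact p.Prime := ⟨CharP.char_is_prime F p⟩
  have hpK : CharP (AlgebraicClosure F) p := charP_of_injective_algebraMap φ.injective p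
  have hdK : (MvPolynomial.map φ f).totalDegree = d := by
    rw [← hd, totalDegree, totalDegree, support_map_of_injective _ φ.injective]
  obtain ⟨P, hP0, hPd, hP⟩ := CM.exists_disc p habs d hdK hd2
  have hcount := CM.count φ n (d * d + (d - 1) * d) (Fintype.card (CM.Tri d) * (2 * (d * (d - 1))))
    (fun ξ => ¬ Irreducible (MvPolynomial.map φ (CM.slice f ξ.1 ξ.2.1 ξ.2.2))) P hP0 hPd (by
      intro ν ω h
      obtain ⟨hc, α, h0, h1⟩ := hP _ _ h
      obtain ⟨Q, hQ0, hQd, hQ⟩ := CM.exists_Q habs d hdK hd2 _ _ hc α h0 h1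
      refine ⟨Q, hQ0, hQd, fun η hη hbad => hbad ?_⟩
      rw [CM.slice_map]
      exact hQ _ hη)
  have hcR : (Nat.card {ξ : (Fin (n + 1) → F) × (Fin n → F) × (Fin n → F) //
      ¬ Irreducible (MvPolynomial.map φ (CM.slice f ξ.1 ξ.2.1 ξ.2.2))} : ℝ) ≤
      ((d * d + (d - 1) * d + Fintype.card (CM.Tri d) * (2 * (d * (d - 1))) : ℕ) : ℝ)
        * (Fintype.card F : ℝ) ^ (3 * n) := by
    exact_mod_cast hcount
  refine hcR.trans ?_
  refine mul_le_mul_of_nonneg_right ?_ (by positivity)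
  have ht := CM.card_tri d
  have : Fintype.card (CM.Tri d) * (2 * (d * (d - 1))) = d * (d + 1) * (d * (d - 1)) := by
    rw [← ht]; ring
  rw [this]
  obtain ⟨e, rfl⟩ := Nat.exists_eq_add_of_le hd2
  have h1 : 2 + e - 1 = e + 1 := by omega
  rw [h1]
  push_cast
  have he : (0 : ℝ) ≤ e := Nat.cast_nonneg e
  have h2 : (0 : ℝ) ≤ e ^ 2 := by positivity
  have h3 : (0 : ℝ) ≤ e ^ 3 := by positivity
  have h4 : (0 : ℝ) ≤ e ^ 4 := by positivity
  have hee : (0 : ℝ) ≤ e ^ 2 * (e - 1) ^ 2 := by positivity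
  have hprod_nonneg : (0 : ℝ) ≤ e * ((e : ℝ) - 1) := by
    rcases Nat.eq_zero_or_pos e with h | h
    · simp [h]
    · have : (1 : ℝ) ≤ e := by exact_mod_cast h
      exact mul_nonneg he (by linarith)
  nlinarith
end
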